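/- Let c > 0 be an admissible exceptional-zero constant. For every ε > 0, 100% of fundamental discriminants D satisfy: ∑_{χ ∈ V} (log L(1,χ))² ≤ #V · (log log |D|)^{2 − log 2 + ε}, where V is the set of quadratic Dirichlet characters χ modulo |D| such that L(s,χ) has no real zero β with β > 1 − c/log |D|. (That is, there exists c > 0 such that for every ε > 0 the stated bound holds for 100% of fundamental discriminants.) -/

import Mathlib

open Filter Topology NumberField

noncomputable section

/-- A fundamental discriminant: an integer `D ≠ 1` that is either squarefree and `≡ 1 (mod 4)`,
or `4m` with `m` squarefree and `m ≡ 2, 3 (mod 4)`. -/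
def IsFundDiscr (D : ℤ) : Prop :=
  D ≠ 1 ∧ ((Squarefree D ∧ D % 4 = 1) ∨
    ∃ m : ℤ, D = 4 * m ∧ Squarefree m ∧ (m % 4 = 2 ∨ m % 4 = 3))

/-- The number of fundamental discriminants `D` with `|D| ≤ X` satisfying `P`. -/
def fdCount (P : ℤ → Prop) (X : ℝ) : ℕ :=
  Nat.card {D : ℤ // IsFundDiscr D ∧ |(D : ℝ)| ≤ X ∧ P D}

/-- The property `P` holds for 100% of fundamental discriminants. -/
def FdDensityOne (P : ℤ → Prop) : Prop :=
  Tendsto (fun X : ℝ => (fdCount P X : ℝ) / (fdCount (fun _ => True) X : ℝ)) atTop (𝓝 1)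


open Finset in
lemma sum_range_zmod {f : ℕ} [NeZero f] (g : ZMod f → ℂ) :
    ∑ t ∈ range f, g (t : ZMod f) = ∑ x : ZMod f, g x := by
  refine Finset.sum_nbij' (fun t => (t : ZMod f)) ZMod.val ?_ ?_ ?_ ?_ ?_
  · intro t _; simp
  · intro x _; simpa using ZMod.val_lt x
  · intro t ht; simpa using ZMod.val_cast_of_lt (by simpa using ht)
  · intro x _; simp
  · intro t _; rfl

open Finset in
lemma parseval_zmod {f : ℕ} [NeZero f] (g : ZMod f → ℂ) :
    ∑ a : ZMod f, ‖∑ x : ZMod f, g x * ZMod.stdAddChar (a * x)‖ ^ 2 = f * ∑ x : ZMod f, ‖g x‖ ^ 2 := by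
  have key : ∀ x y : ZMod f, ∑ a : ZMod f, ZMod.stdAddChar (a * x) * (starRingEnd ℂ) (ZMod.stdAddChar (a * y))
      = if x = y then (f : ℂ) else 0 := by
    intro x y
    have h := AddChar.sum_mulShift (R := ZMod f) (R' := ℂ) (ψ := ZMod.stdAddChar) (x - y) (ZMod.isPrimitive_stdAddChar f)
    rw [ZMod.card] at h
    have h2 : (if x - y = 0 then (f:ℂ) else 0) = if x = y then (f : ℂ) else 0 := by simp [sub_eq_zero]
    rw [← h2]
    push_cast at h
    rw [← h]
    refine Finset.sum_congr rfl fun a _ => ?_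
    rw [mul_sub, sub_eq_add_neg, AddChar.map_add_eq_mul, AddChar.map_neg_eq_conj]
  have : ((∑ a : ZMod f, ‖∑ x : ZMod f, g x * ZMod.stdAddChar (a * x)‖ ^ 2 : ℝ) : ℂ) = ((f * ∑ x : ZMod f, ‖g x‖ ^ 2 : ℝ) : ℂ) := by
    push_cast
    simp_rw [← Complex.mul_conj', map_sum, Finset.sum_mul_sum, map_mul]
    rw [Finset.sum_comm]
    rw [Finset.mul_sum]
    refine Finset.sum_congr rfl fun x _ => ?_
    rw [Finset.sum_comm]
    calc _ = ∑ y : ZMod f, g x * (starRingEnd ℂ) (g y) * (if x = y then (f : ℂ) else 0) := by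
            refine Finset.sum_congr rfl fun y _ => ?_
            rw [← key, Finset.mul_sum]
            refine Finset.sum_congr rfl fun a _ => ?_
            ring
      _ = _ := by simp; ring
  exact_mod_cast this

open Finset in
lemma parseval_range {f : ℕ} [NeZero f] (L : ℕ) (hL : L ≤ f) :
    ∑ a : ZMod f, ‖∑ t ∈ range L, (ZMod.stdAddChar (a * (t : ZMod f)) : ℂ)‖ ^ 2 = f * L := by
  have h := parseval_zmod (f := f) (fun x => if x.val < L then 1 else 0)
  have e : ∀ a : ZMod f, ∑ x : ZMod f, (if x.val < L then (1:ℂ) else 0) * ZMod.stdAddChar (a * x) =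
      ∑ t ∈ range L, (ZMod.stdAddChar (a * (t : ZMod f)) : ℂ) := by
    intro a
    rw [← sum_range_zmod (fun x => (if x.val < L then (1:ℂ) else 0) * ZMod.stdAddChar (a * x))]
    rw [← Finset.sum_subset (Finset.range_subset_range.mpr hL)]
    · refine Finset.sum_congr rfl fun t ht => ?_
      have : (t : ZMod f).val = t := ZMod.val_cast_of_lt (lt_of_lt_of_le (by simpa using ht) hL)
      rw [this, if_pos (by simpa using ht), one_mul]
    · intro t ht1 ht2
      have : (t : ZMod f).val = t := ZMod.val_cast_of_lt (by simpa using ht1)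
      rw [this, if_neg (by simpa using ht2), zero_mul]
  simp_rw [e] at h
  rw [h]
  congr 1
  have h3 : ((∑ x : ZMod f, ‖(if x.val < L then (1:ℂ) else 0)‖ ^ 2 : ℝ) : ℂ) = L := by
    push_cast
    rw [← sum_range_zmod (fun x => ((‖(if x.val < L then (1:ℂ) else 0)‖ : ℝ) : ℂ) ^ 2)]
    rw [← Finset.sum_subset (Finset.range_subset_range.mpr hL)]
    · rw [Finset.sum_congr rfl (g := fun _ => (1:ℂ))]
      · simp
      · intro t ht
        have : (t : ZMod f).val = t := ZMod.val_cast_of_lt (lt_of_lt_of_le (by simpa using ht) hL)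
        rw [this, if_pos (by simpa using ht)]; simp
    · intro t ht1 ht2
      have : (t : ZMod f).val = t := ZMod.val_cast_of_lt (by simpa using ht1)
      rw [this, if_neg (by simpa using ht2)]; simp
  exact_mod_cast h3

lemma quad_inv {f : ℕ} {χ : DirichletCharacter ℂ f} (hq : χ ^ 2 = 1) : χ⁻¹ = χ := by
  rw [inv_eq_iff_mul_eq_one, ← sq, hq]

open Finset in
lemma gauss_norm {f : ℕ} [NeZero f] (χ : DirichletCharacter ℂ f) (hp : χ.IsPrimitive)
    (hq : χ ^ 2 = 1) : ‖gaussSum χ ZMod.stdAddChar‖ ^ 2 = f := by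
  have h := parseval_zmod (f := f) (fun x => χ x)
  have e : ∀ a : ZMod f, ∑ x : ZMod f, χ x * ZMod.stdAddChar (a * x) = χ a * gaussSum χ ZMod.stdAddChar := by
    intro a
    have := gaussSum_mulShift_of_isPrimitive ZMod.stdAddChar hp a
    rw [quad_inv hq] at this
    rw [← this]; rfl
  simp_rw [e, norm_mul, mul_pow] at h
  rw [← Finset.sum_mul, mul_comm] at h
  refine mul_right_cancel₀ (ne_of_gt ?_) h
  have : ‖χ (1 : ZMod f)‖ ^ 2 ≤ ∑ x : ZMod f, ‖χ x‖ ^ 2 :=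
    Finset.single_le_sum (f := fun x : ZMod f => ‖χ x‖ ^ 2) (fun x _ => by positivity) (Finset.mem_univ 1)
  simp at this
  linarith

open Finset in
lemma pv_short {f : ℕ} [NeZero f] (χ : DirichletCharacter ℂ f) (hp : χ.IsPrimitive)
    (hq : χ ^ 2 = 1) (s : ZMod f) (L h : ℕ) (hh : 0 < h) (hL : L ≤ f) :
    ‖∑ t ∈ range L, χ ((t : ZMod f) + s)‖ ≤ 2 * h + f / √h := by
  have hχ1 : ∀ x : ZMod f, ‖χ x‖ ≤ 1 := fun x => χ.norm_le_one x
  have hhr : (0:ℝ) < h := by exact_mod_cast hh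
  by_cases hf : f < h
  · calc ‖∑ t ∈ range L, χ ((t : ZMod f) + s)‖ ≤ ∑ t ∈ range L, (1:ℝ) := norm_sum_le_of_le _ (fun t _ => hχ1 _)
      _ = L := by simp
      _ ≤ f := by exact_mod_cast hL
      _ ≤ h := by exact_mod_cast hf.le
      _ ≤ _ := by have : (0:ℝ) ≤ f / √h := by positivity
                  linarith
  push Not at hf
  set τ := gaussSum χ ZMod.stdAddChar with hτ
  have hτn : ‖τ‖ = √f := by
    rw [← gauss_norm χ hp hq, Real.sqrt_sq (norm_nonneg _)]
  have e : ∀ a : ZMod f, χ a * τ = ∑ x : ZMod f, χ x * ZMod.stdAddChar (a * x) := by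
    intro a
    have := gaussSum_mulShift_of_isPrimitive ZMod.stdAddChar hp a
    rw [quad_inv hq] at this
    rw [← this]; rfl
  -- bilinear
  have hbil : ‖∑ y ∈ range h, ∑ t ∈ range L, χ ((t : ZMod f) + (y : ZMod f) + s)‖ * √f ≤ f * (√L * √h) := by
    rw [← hτn, ← norm_mul, Finset.sum_mul]
    simp_rw [Finset.sum_mul, e]
    have : ∑ y ∈ range h, ∑ t ∈ range L, ∑ x : ZMod f, χ x * ZMod.stdAddChar (((t : ZMod f) + (y : ZMod f) + s) * x)
      = ∑ x : ZMod f, (χ x * ZMod.stdAddChar (s * x)) * ((∑ t ∈ range L, ZMod.stdAddChar (x * (t : ZMod f))) * (∑ y ∈ range h, ZMod.stdAddChar (x * (y : ZMod f)))) := by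
      simp_rw [Finset.sum_mul_sum, Finset.mul_sum]
      rw [Finset.sum_comm' (t' := range L) (s' := fun _ => range h) (by intros; tauto)]
      rw [Finset.sum_comm]
      conv_lhs => 
        enter [2, y]
        rw [Finset.sum_comm]
      rw [Finset.sum_comm]
      refine Finset.sum_congr rfl fun x _ => ?_
      rw [Finset.sum_comm]
      refine Finset.sum_congr rfl fun t _ => ?_
      refine Finset.sum_congr rfl fun y _ => ?_
      rw [add_mul, add_mul, AddChar.map_add_eq_mul, AddChar.map_add_eq_mul, mul_comm x, mul_comm x]
      ring
    rw [this]
    calc _ ≤ ∑ x : ZMod f, ‖∑ t ∈ range L, (ZMod.stdAddChar (x * (t : ZMod f)) : ℂ)‖ * ‖∑ y ∈ range h, (ZMod.stdAddChar (x * (y : ZMod f)) : ℂ)‖ := by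
            refine norm_sum_le_of_le _ fun x _ => ?_
            rw [norm_mul, norm_mul, norm_mul, AddChar.norm_apply, mul_one]
            exact mul_le_of_le_one_left (by positivity) (hχ1 x)
      _ ≤ √(∑ x : ZMod f, ‖∑ t ∈ range L, (ZMod.stdAddChar (x * (t : ZMod f)) : ℂ)‖ ^ 2) * √(∑ x : ZMod f, ‖∑ y ∈ range h, (ZMod.stdAddChar (x * (y : ZMod f)) : ℂ)‖ ^ 2) := Real.sum_mul_le_sqrt_mul_sqrt _ _ _
      _ = f * (√L * √h) := by
            rw [parseval_range L hL, parseval_range h hf, Real.sqrt_mul (by positivity), Real.sqrt_mul (by positivity)]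
            nth_rewrite 3 [← Real.mul_self_sqrt (show (0:ℝ) ≤ f by positivity)]
            ring
  -- shift
  have hshift : ∀ y : ℕ, ‖∑ t ∈ range L, χ ((t : ZMod f) + (y : ZMod f) + s) - ∑ t ∈ range L, χ ((t : ZMod f) + s)‖ ≤ 2 * y := by
    intro y
    induction y with
    | zero => simp
    | succ y ih =>
      have h1 : ∑ t ∈ range L, χ ((t : ZMod f) + ((y + 1 : ℕ) : ZMod f) + s) - ∑ t ∈ range L, χ ((t : ZMod f) + (y : ZMod f) + s) = χ ((L : ZMod f) + (y : ZMod f) + s) - χ (((0 : ℕ) : ZMod f) + (y : ZMod f) + s) := by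
        rw [← Finset.sum_sub_distrib, ← Finset.sum_range_sub (fun (t : ℕ) => χ ((t : ZMod f) + (y : ZMod f) + s))]
        refine Finset.sum_congr rfl fun t _ => ?_
        push_cast; congr 2; ring
      have h2 : ‖χ ((L : ZMod f) + (y : ZMod f) + s) - χ (((0 : ℕ) : ZMod f) + (y : ZMod f) + s)‖ ≤ 2 := by
        refine (norm_sub_le _ _).trans ?_
        linarith [hχ1 ((L : ZMod f) + y + s), hχ1 (((0 : ℕ) : ZMod f) + y + s)]
      rw [← h1] at h2
      have := norm_add_le _ _ |>.trans (add_le_add h2 ih)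
      rw [sub_add_sub_cancel] at this
      push_cast at this ⊢
      linarith
  set S := ∑ t ∈ range L, χ ((t : ZMod f) + s) with hS
  have h3 : (h:ℝ) * ‖S‖ ≤ 2 * h * h + ‖∑ y ∈ range h, ∑ t ∈ range L, χ ((t : ZMod f) + (y : ZMod f) + s)‖ := by
    have : (h : ℂ) * S = ∑ y ∈ range h, ∑ t ∈ range L, χ ((t : ZMod f) + (y : ZMod f) + s) - ∑ y ∈ range h, (∑ t ∈ range L, χ ((t : ZMod f) + (y : ZMod f) + s) - S) := by
      rw [Finset.sum_sub_distrib]; simp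
    have h4 := congrArg norm this
    rw [norm_mul, Complex.norm_natCast] at h4
    rw [h4]
    refine (norm_sub_le _ _).trans ?_
    have : ‖∑ y ∈ range h, (∑ t ∈ range L, χ ((t : ZMod f) + (y : ZMod f) + s) - S)‖ ≤ ∑ y ∈ range h, (2 * h : ℝ) := by
      refine norm_sum_le_of_le _ fun y hy => (hshift y).trans ?_
      have : (y:ℝ) ≤ h := by exact_mod_cast (Finset.mem_range.mp hy).le
      linarith
    rw [Finset.sum_const, Finset.card_range, nsmul_eq_mul] at this
    linarith
  have hsf : (0:ℝ) < √f := by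
    have : (0:ℝ) < f := by exact_mod_cast Nat.pos_of_ne_zero (NeZero.ne f)
    positivity
  have hsh : (0:ℝ) < √h := by positivity
  have hsL : √(L:ℝ) ≤ √f := Real.sqrt_le_sqrt (by exact_mod_cast hL)
  have h5 : ‖∑ y ∈ range h, ∑ t ∈ range L, χ ((t : ZMod f) + (y : ZMod f) + s)‖ ≤ f * √h := by
    refine le_of_mul_le_mul_right (hbil.trans ?_) hsf
    calc f * (√L * √h) ≤ f * (√f * √h) := by gcongr
      _ = _ := by ring
  have h6 : (h:ℝ) * ‖S‖ ≤ h * (2 * h + f / √h) := by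
    refine h3.trans ?_
    have : (h:ℝ) * (2 * h + f / √h) = 2 * h * h + f * √h := by
      have : (h:ℝ) = √h * √h := (Real.mul_self_sqrt hhr.le).symm
      have h7 : (h:ℝ) * (f / √h) = f * √h := by
        rw [mul_div_assoc', div_eq_iff hsh.ne']
        nth_rewrite 1 [this]; ring
      rw [mul_add, h7]; ring
    rw [this]; linarith
  exact le_of_mul_le_mul_left h6 hhr

open Finset in
lemma pv {f : ℕ} [NeZero f] (χ : DirichletCharacter ℂ f) (hp : χ.IsPrimitive)
    (hq : χ ^ 2 = 1) (h1 : χ ≠ 1) (s : ZMod f) (L h : ℕ) (hh : 0 < h) :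
    ‖∑ t ∈ range L, χ ((t : ZMod f) + s)‖ ≤ 2 * h + f / √h := by
  induction L using Nat.strong_induction_on with
  | _ L ih =>
    by_cases hL : L ≤ f
    · exact pv_short χ hp hq s L h hh hL
    push Not at hL
    obtain ⟨m, rfl⟩ := Nat.exists_eq_add_of_le hL.le
    have hf : 0 < f := Nat.pos_of_ne_zero (NeZero.ne f)
    rw [Finset.sum_range_add]
    have hz : ∑ t ∈ range f, χ ((t : ZMod f) + s) = 0 := by
      rw [sum_range_zmod (fun x => χ (x + s))]
      exact (Equiv.sum_comp (Equiv.addRight s) (fun x => χ x)).trans (MulChar.sum_eq_zero_of_ne_one h1)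
    rw [hz, zero_add]
    simpa using ih m (by omega)


open Finset in
lemma abel_bound (a : ℕ → ℝ) (c : ℕ → ℂ) (B : ℝ) (N : ℕ)
    (ha : ∀ n, N ≤ n → a (n+1) ≤ a n) (ha0 : ∀ n, N ≤ n → 0 ≤ a n)
    (hB : ∀ L, ‖∑ t ∈ range L, c t‖ ≤ B) (M : ℕ) (hM : N ≤ M) :
    ‖∑ n ∈ Ico N M, (a n : ℂ) * c n‖ ≤ 2 * B * a N := by
  set C : ℕ → ℂ := fun L => ∑ t ∈ range L, c t with hC
  have hid : ∀ M, N ≤ M → ∑ n ∈ Ico N M, (a n : ℂ) * c n =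
      a M * (C M - C N) + ∑ n ∈ Ico N M, ((a n - a (n+1) : ℝ) : ℂ) * (C (n+1) - C N) := by
    intro M hM
    induction M, hM using Nat.le_induction with
    | base => simp
    | succ M hM ih =>
      rw [Finset.sum_Ico_succ_top hM, ih, Finset.sum_Ico_succ_top hM]
      have : C (M+1) = C M + c M := Finset.sum_range_succ _ _
      rw [this]; push_cast; ring
  have hCC : ∀ n, ‖C n - C N‖ ≤ 2 * B := fun n => by
    refine (norm_sub_le _ _).trans ?_
    linarith [hB n, hB N]
  have htel : ∀ M, N ≤ M → ∑ n ∈ Ico N M, (a n - a (n+1)) = a N - a M := by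
    intro M hM
    induction M, hM using Nat.le_induction with
    | base => simp
    | succ M hM ih => rw [Finset.sum_Ico_succ_top hM, ih]; ring
  rw [hid M hM]
  calc _ ≤ a M * (2 * B) + ∑ n ∈ Ico N M, (a n - a (n+1)) * (2 * B) := by
        refine (norm_add_le _ _).trans (add_le_add ?_ ?_)
        · rw [norm_mul, Complex.norm_real, Real.norm_of_nonneg (ha0 M hM)]
          exact mul_le_mul_of_nonneg_left (hCC M) (ha0 M hM)
        · refine norm_sum_le_of_le _ fun n hn => ?_
          have hn' := (Finset.mem_Ico.mp hn).1
          rw [norm_mul, Complex.norm_real, Real.norm_of_nonneg (by linarith [ha n hn'])]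
          exact mul_le_mul_of_nonneg_left (hCC _) (by linarith [ha n hn'])
    _ = 2 * B * a N := by rw [← Finset.sum_mul, htel M hM]; ring

open Finset in
lemma tail_bound {q : ℕ} [NeZero q] (χ : DirichletCharacter ℂ q) (h1 : χ ≠ 1) (B : ℝ)
    (hB : ∀ L, ‖∑ t ∈ range L, χ (t : ZMod q)‖ ≤ B) (N : ℕ) (hN : 0 < N) :
    ‖χ.LFunction 1 - ∑ n ∈ range N, χ (n : ZMod q) / n‖ ≤ 2 * B / N := by
  have hB0 : 0 ≤ B := (norm_nonneg _).trans (hB 0)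
  have hs : ∀ s : ℝ, 1 < s → ‖χ.LFunction s - ∑ n ∈ range N, LSeries.term (fun n => χ (n : ZMod q)) s n‖ ≤ 2 * B / N := by
    intro s hs
    have hs' : 1 < (s : ℂ).re := by simpa using hs
    rw [DirichletCharacter.LFunction_eq_LSeries χ hs']
    have hsum := (χ.LSeriesSummable_of_one_lt_re hs').hasSum.tendsto_sum_nat
    have h2 : Tendsto (fun M => ‖∑ n ∈ range M, LSeries.term (fun n => χ (n : ZMod q)) s n - ∑ n ∈ range N, LSeries.term (fun n => χ (n : ZMod q)) s n‖) atTop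
      (𝓝 ‖LSeries (fun n => χ (n : ZMod q)) s - ∑ n ∈ range N, LSeries.term (fun n => χ (n : ZMod q)) s n‖) :=
      (hsum.sub_const _).norm
    refine le_of_tendsto h2 ?_
    filter_upwards [eventually_ge_atTop N] with M hM
    rw [← Finset.sum_Ico_eq_sub _ hM]
    have h3 := abel_bound (fun n => (n:ℝ) ^ (-s)) (fun n => χ (n : ZMod q)) B N (by
      intro n hn
      refine Real.rpow_le_rpow_of_nonpos (by exact_mod_cast (by omega)) (by push_cast; linarith) (by linarith)) (fun n _ => by positivity) hB M hM
    have h4 : ∑ n ∈ Ico N M, LSeries.term (fun n => χ (n : ZMod q)) s n = ∑ n ∈ Ico N M, (((n:ℝ) ^ (-s) : ℝ) : ℂ) * χ (n : ZMod q) := by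
      refine Finset.sum_congr rfl fun n hn => ?_
      have hn0 : n ≠ 0 := by have := (Finset.mem_Ico.mp hn).1; omega
      rw [LSeries.term_of_ne_zero hn0, Complex.ofReal_cpow (by positivity)]
      push_cast
      rw [Complex.cpow_neg]; field_simp
    rw [h4]
    refine h3.trans ?_
    rw [mul_div_assoc, mul_assoc]
    have hN1 : (1:ℝ) ≤ N := by exact_mod_cast hN
    have : (N:ℝ) ^ (-s) ≤ (N:ℝ) ^ (-1:ℝ) := Real.rpow_le_rpow_of_exponent_le hN1 (by linarith)
    rw [Real.rpow_neg_one] at this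
    have h5 : B * (N:ℝ)^(-s) ≤ B / N := by
      rw [div_eq_mul_inv]; gcongr
    simpa using mul_le_mul_of_nonneg_left h5 (by norm_num : (0:ℝ) ≤ 2)
  have hcont : Tendsto (fun s : ℝ => ‖χ.LFunction s - ∑ n ∈ range N, LSeries.term (fun n => χ (n : ZMod q)) s n‖) (𝓝[>] 1)
      (𝓝 ‖χ.LFunction 1 - ∑ n ∈ range N, χ (n : ZMod q) / n‖) := by
    refine Tendsto.norm (Tendsto.sub ?_ ?_)
    · have : Continuous (fun s : ℝ => χ.LFunction s) := (DirichletCharacter.differentiable_LFunction h1).continuous.comp Complex.continuous_ofReal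
      have := this.tendsto 1
      simp only [Complex.ofReal_one] at this
      exact this.mono_left nhdsWithin_le_nhds
    · refine tendsto_finsetSum _ fun n _ => ?_
      rcases Nat.eq_zero_or_pos n with rfl | hn
      · simp
      · have : Continuous (fun s : ℝ => LSeries.term (fun n => χ (n : ZMod q)) s n) := by
          simp_rw [LSeries.term_of_ne_zero hn.ne']
          refine Continuous.div continuous_const ?_ ?_
          · refine Continuous.const_cpow Complex.continuous_ofReal (Or.inl (by exact_mod_cast hn.ne'))
          · intro s; simp [Complex.cpow_eq_zero_iff, hn.ne']
        have := this.tendsto 1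
        rw [LSeries.term_of_ne_zero hn.ne'] at this
        simp only [Complex.ofReal_one, Complex.cpow_one] at this
        exact this.mono_left nhdsWithin_le_nhds
  exact le_of_tendsto hcont (by filter_upwards [self_mem_nhdsWithin] with s hs' using hs s hs')

open Finset in
lemma char_sum_bdd {f : ℕ} [NeZero f] (χ : DirichletCharacter ℂ f) (h1 : χ ≠ 1) (L : ℕ) :
    ‖∑ t ∈ range L, χ (t : ZMod f)‖ ≤ f := by
  induction L using Nat.strong_induction_on with
  | _ L ih =>
    by_cases hL : L ≤ f
    · calc ‖∑ t ∈ range L, χ (t : ZMod f)‖ ≤ ∑ t ∈ range L, (1:ℝ) := norm_sum_le_of_le _ (fun t _ => χ.norm_le_one _)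
        _ = L := by simp
        _ ≤ f := by exact_mod_cast hL
    push Not at hL
    obtain ⟨m, rfl⟩ := Nat.exists_eq_add_of_le hL.le
    have hf : 0 < f := Nat.pos_of_ne_zero (NeZero.ne f)
    rw [Finset.sum_range_add]
    have hz : ∑ t ∈ range f, χ (t : ZMod f) = 0 := by
      rw [sum_range_zmod (fun x => χ x)]
      exact (MulChar.sum_eq_zero_of_ne_one h1)
    rw [hz, zero_add]
    simpa using ih m (by omega)

lemma quad_vals {f : ℕ} (χ : DirichletCharacter ℂ f) (hq : χ ^ 2 = 1) (x : ZMod f) :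
    χ x = 0 ∨ χ x = 1 ∨ χ x = -1 := by
  by_cases hx : IsUnit x
  · right
    have := congrArg (fun ψ : DirichletCharacter ℂ f => ψ x) hq
    simp only [MulChar.pow_apply' χ two_ne_zero] at this
    rw [MulChar.one_apply hx] at this
    simpa [sq_eq_one_iff] using this
  · left; exact χ.map_nonunit hx

open Finset in
lemma L1_real {q : ℕ} [NeZero q] (χ : DirichletCharacter ℂ q) (hq : χ ^ 2 = 1) (h1 : χ ≠ 1) :
    (χ.LFunction 1).im = 0 := by
  have hB := char_sum_bdd χ h1
  have h : Tendsto (fun N : ℕ => ∑ n ∈ range N, χ (n : ZMod q) / n) atTop (𝓝 (χ.LFunction 1)) := by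
    rw [tendsto_iff_norm_sub_tendsto_zero]
    refine squeeze_zero' (Eventually.of_forall fun _ => norm_nonneg _) (g := fun N : ℕ => 2 * (q:ℝ) / N) ?_ (tendsto_const_div_atTop_nhds_zero_nat _)
    filter_upwards [eventually_gt_atTop 0] with N hN
    rw [norm_sub_rev]
    exact tail_bound χ h1 q hB N hN
  have h2 := (Complex.continuous_im.tendsto _).comp h
  refine tendsto_nhds_unique h2 ?_
  refine tendsto_const_nhds.congr fun N => ?_
  simp only [Function.comp]
  rw [Complex.im_sum]
  symm
  refine Finset.sum_eq_zero fun n _ => ?_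
  rcases quad_vals χ hq (n : ZMod q) with h | h | h <;> simp [h]

lemma L1_abs {q : ℕ} [NeZero q] (χ : DirichletCharacter ℂ q) (hq : χ ^ 2 = 1) (h1 : χ ≠ 1) :
    Real.log (χ.LFunction 1).re = Real.log ‖χ.LFunction 1‖ := by
  rw [← Real.log_abs]
  congr 1
  have := L1_real χ hq h1
  rw [Complex.abs_re_eq_norm.mpr this]


lemma coe_ne_zero_coprime {f : ℕ} (χ : DirichletCharacter ℂ f) {n : ℕ} (h : χ (n : ZMod f) ≠ 0) :
    Nat.Coprime n f := by
  by_contra hc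
  exact h (χ.map_nonunit (by rwa [ZMod.isUnit_iff_coprime]))

lemma coprime_ne_zero {f : ℕ} (χ : DirichletCharacter ℂ f) {n : ℕ} (h : Nat.Coprime n f) :
    χ (n : ZMod f) ≠ 0 := by
  have hu : IsUnit (n : ZMod f) := by rwa [ZMod.isUnit_iff_coprime]
  exact (hu.map χ).ne_zero

lemma exists_gen {p m : ℕ} (hp : p.Prime) [NeZero m] (χ : DirichletCharacter ℂ (p * m))
    (hprim : χ.IsPrimitive) (hq : χ ^ 2 = 1) :
    ∃ g : ℕ, g ≡ 1 [MOD m] ∧ χ (g : ZMod (p * m)) = -1 := by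
  have : NeZero p := ⟨hp.ne_zero⟩
  have hd : m ∣ p * m := Dvd.intro_left p rfl
  have hnf : ¬ χ.FactorsThrough m := by
    intro h
    have h1 : χ.conductor ∣ m := (DirichletCharacter.mem_conductorSet_iff_conductor_dvd χ hd).mp h
    have h2 : χ.conductor = p * m := hprim
    rw [h2] at h1
    have h3 := Nat.le_of_dvd (Nat.pos_of_ne_zero (NeZero.ne m)) h1
    have h4 := hp.two_le
    have h5 : 0 < m := Nat.pos_of_ne_zero (NeZero.ne m)
    nlinarith
  rw [DirichletCharacter.factorsThrough_iff_ker_unitsMap hd] at hnf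
  rw [SetLike.not_le_iff_exists] at hnf
  obtain ⟨u, hu1, hu2⟩ := hnf
  refine ⟨(u : ZMod (p*m)).val, ?_, ?_⟩
  · rw [MonoidHom.mem_ker] at hu1
    have := congrArg (fun v : (ZMod m)ˣ => (v : ZMod m)) hu1
    simp only [ZMod.unitsMap_val, Units.val_one] at this
    rw [← ZMod.natCast_eq_natCast_iff]
    rw [Nat.cast_one, ← this, ZMod.cast_eq_val]
  · rw [ZMod.natCast_val, ZMod.cast_id', id]
    rw [MonoidHom.mem_ker] at hu2
    rcases quad_vals χ hq (u : ZMod (p*m)) with h | h | h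
    · exact absurd h ((u.isUnit.map χ).ne_zero)
    · exfalso; apply hu2; ext; simpa using h
    · exact h

lemma lemA_sq {p m : ℕ} [Fact p.Prime] (hcop : Nat.Coprime p m) (χ : DirichletCharacter ℂ (p * m))
    (hq : χ ^ 2 = 1) (x : ℕ) (hx : x ≡ 1 [MOD m]) (hx0 : χ (x : ZMod (p * m)) ≠ 0)
    (hl : legendreSym p x = 1) : χ (x : ZMod (p * m)) = 1 := by
  have hxp : ((x : ℤ) : ZMod p) ≠ 0 := by
    intro h; rw [(legendreSym.eq_zero_iff p x).mpr h] at hl; exact absurd hl (by norm_num)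
  obtain ⟨s, hs⟩ := (legendreSym.eq_one_iff p hxp).mp hl
  obtain ⟨t, ht1, ht2⟩ := Nat.chineseRemainder hcop s.val 1
  have htt : t * t ≡ x [MOD p * m] := by
    rw [← Nat.modEq_and_modEq_iff_modEq_mul hcop]
    constructor
    · rw [← ZMod.natCast_eq_natCast_iff]
      rw [← ZMod.natCast_eq_natCast_iff] at ht1
      push_cast
      rw [ht1]
      simp only [ZMod.natCast_val, ZMod.cast_id', id]
      rw [← hs]; push_cast; rfl
    · exact (ht2.mul ht2).trans hx.symm
  rw [← ZMod.natCast_eq_natCast_iff] at htt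
  rw [← htt] at hx0 ⊢
  push_cast at hx0 ⊢
  rw [map_mul] at hx0 ⊢
  rcases quad_vals χ hq (t : ZMod (p*m)) with h | h | h <;> simp [h] at hx0 ⊢

lemma lemA {p m : ℕ} [Fact p.Prime] [NeZero m] (hcop : Nat.Coprime p m) (χ : DirichletCharacter ℂ (p * m))
    (hprim : χ.IsPrimitive) (hq : χ ^ 2 = 1) (x : ℕ) (hx : x ≡ 1 [MOD m]) (hx0 : χ (x : ZMod (p * m)) ≠ 0) :
    χ (x : ZMod (p * m)) = ((legendreSym p x : ℤ) : ℂ) := by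
  obtain ⟨g, hg1, hg2⟩ := exists_gen (Fact.out : p.Prime) χ hprim hq
  have hleg : ∀ y : ℕ, χ (y : ZMod (p * m)) ≠ 0 → legendreSym p y = 1 ∨ legendreSym p y = -1 := by
    intro y hy
    have hc := (coe_ne_zero_coprime χ hy).coprime_mul_right_right
    refine legendreSym.eq_one_or_neg_one p ?_
    rw [Int.cast_natCast, Ne, ZMod.natCast_eq_zero_iff]
    intro h
    exact (Nat.Prime.coprime_iff_not_dvd (Fact.out : p.Prime)).mp hc.symm h
  have hg0 : χ (g : ZMod (p * m)) ≠ 0 := by rw [hg2]; norm_num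
  have hgl : legendreSym p g = -1 := by
    rcases hleg g hg0 with h | h
    · have := lemA_sq hcop χ hq g hg1 hg0 h
      rw [hg2] at this; norm_num at this
    · exact h
  rcases hleg x hx0 with h | h
  · rw [lemA_sq hcop χ hq x hx hx0 h, h]; simp
  · have h2 := lemA_sq hcop χ hq (x * g) (by simpa using hx.mul hg1) (by
      push_cast; rw [map_mul]; exact mul_ne_zero hx0 hg0) (by
      push_cast; rw [legendreSym.mul, h, hgl]; norm_num)
    push_cast at h2
    rw [map_mul, hg2] at h2
    rw [h]; push_cast
    linear_combination -h2

lemma class_aux {f : ℕ} [NeZero f] (χ : DirichletCharacter ℂ f) (hprim : χ.IsPrimitive) (hq : χ ^ 2 = 1)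
    (b d : ℕ) (hf : f = b * d) (hbd : Nat.Coprime b d) (hsq : Squarefree d) (hodd : Odd d) :
    ∀ e k : ℕ, d = e * k → ∀ n : ℕ, n ≡ 1 [MOD b * k] → χ (n : ZMod f) ≠ 0 →
      χ (n : ZMod f) = ((jacobiSym n e : ℤ) : ℂ) := by
  intro e
  induction e using Nat.recOnMul with
  | zero => intro k hk; simp at hk; subst hk; simp at hodd
  | one =>
    intro k hk n hn _
    have : (n : ZMod f) = 1 := by
      rw [← Nat.cast_one, ZMod.natCast_eq_natCast_iff]
      rw [hf, hk]; simpa using hn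
    simp [this]
  | prime p hp =>
    intro k hk n hn hn0
    have : Fact p.Prime := ⟨hp⟩
    have hf' : f = p * (b * k) := by rw [hf, hk]; ring
    subst hf'
    have : NeZero (b * k) := ⟨by
      intro h; exact NeZero.ne (p * (b * k)) (by rw [h]; simp)⟩
    rw [← jacobiSym.legendreSym.to_jacobiSym]
    refine lemA ?_ χ hprim hq n hn hn0
    refine Nat.Coprime.mul_right ?_ ?_
    · exact (Nat.Coprime.coprime_dvd_right (Dvd.intro _ hk.symm) hbd).symm
    · rw [hk] at hsq; exact Nat.coprime_of_squarefree_mul hsq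
  | mul e₁ e₂ ih1 ih2 =>
    intro k hk n hn hn0
    have hd0 : d ≠ 0 := hsq.ne_zero
    have he1 : e₁ ≠ 0 := by rintro rfl; simp at hk; exact hd0 hk
    have he2 : e₂ ≠ 0 := by rintro rfl; simp at hk; exact hd0 hk
    have : NeZero e₁ := ⟨he1⟩
    have : NeZero e₂ := ⟨he2⟩
    have hsq' := hsq
    rw [hk] at hsq'
    have hc12 : Nat.Coprime e₁ e₂ := Nat.coprime_of_squarefree_mul hsq'.of_mul_left
    have hck : Nat.Coprime (e₁ * e₂) k := Nat.coprime_of_squarefree_mul hsq'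
    have hcb : Nat.Coprime b (e₁ * e₂) := Nat.Coprime.coprime_dvd_right (Dvd.intro _ hk.symm) hbd
    have hc1 : Nat.Coprime e₁ (b * k * e₂) := 
      Nat.Coprime.mul_right (Nat.Coprime.mul_right hcb.coprime_mul_right_right.symm hck.coprime_mul_right) hc12
    have hc2 : Nat.Coprime e₂ (b * k * e₁) := 
      Nat.Coprime.mul_right (Nat.Coprime.mul_right hcb.coprime_mul_left_right.symm hck.coprime_mul_left) hc12.symm
    obtain ⟨x, hx1, hx2⟩ := Nat.chineseRemainder hc1 n 1
    obtain ⟨y, hy1, hy2⟩ := Nat.chineseRemainder hc2 n 1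
    have hxy : x * y ≡ n [MOD f] := by
      have : f = e₁ * (e₂ * (b * k)) := by rw [hf, hk]; ring
      rw [this, ← Nat.modEq_and_modEq_iff_modEq_mul (by rw [mul_comm e₂]; exact hc1), ← Nat.modEq_and_modEq_iff_modEq_mul hc2.coprime_mul_right_right]
      refine ⟨?_, ?_, ?_⟩
      · simpa using hx1.mul (hy2.of_dvd (Dvd.intro_left _ rfl))
      · simpa using (hx2.of_dvd (Dvd.intro_left _ rfl)).mul hy1
      · have h1 : x ≡ 1 [MOD b * k] := hx2.of_dvd (Dvd.intro _ rfl)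
        have h2 : y ≡ 1 [MOD b * k] := hy2.of_dvd (Dvd.intro _ rfl)
        simpa using (h1.mul h2).trans hn.symm
    rw [← ZMod.natCast_eq_natCast_iff] at hxy
    rw [← hxy] at hn0 ⊢
    push_cast at hn0 ⊢
    rw [map_mul] at hn0 ⊢
    rw [ih1 (e₂ * k) (by rw [hk]; ring) x (by convert hx2 using 1; ring) (left_ne_zero_of_mul hn0),
      ih2 (e₁ * k) (by rw [hk]; ring) y (by convert hy2 using 1; ring) (right_ne_zero_of_mul hn0)]
    rw [jacobiSym.mul_right, jacobiSym.mod_left' (Int.natCast_modEq_iff.mpr hx1), jacobiSym.mod_left' (Int.natCast_modEq_iff.mpr hy1)]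
    push_cast; rfl

lemma classification {a d : ℕ} (ha : a ≤ 3) (hsq : Squarefree d) (hodd : Odd d)
    (χ : DirichletCharacter ℂ (2 ^ a * d)) (hprim : χ.IsPrimitive) (hq : χ ^ 2 = 1) :
    ∃ ψ : ZMod 8 → SignType, ∀ n : ℕ, Odd n →
      χ (n : ZMod (2 ^ a * d)) = (((ψ n : ℤ) * jacobiSym n d : ℤ) : ℂ) := by
  have hd0 : d ≠ 0 := hsq.ne_zero
  have : NeZero (2 ^ a * d) := ⟨by positivity⟩
  have key : ∀ n : ℕ, n ≡ 1 [MOD 8] → χ (n : ZMod (2 ^ a * d)) ≠ 0 → χ (n : ZMod (2 ^ a * d)) = ((jacobiSym n d : ℤ) : ℂ) := by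
    intro n hn hn0
    refine class_aux χ hprim hq (2 ^ a) d rfl ?_ hsq hodd d 1 (by simp) n ?_ hn0
    · exact Nat.Coprime.pow_left _ (Nat.coprime_two_left.mpr hodd)
    · rw [mul_one]
      exact hn.of_dvd (pow_dvd_pow 2 ha : 2 ^ a ∣ 2 ^ 3)
  have key2 : ∀ n m : ℕ, Odd m → n ≡ m [MOD 8] → χ (n : ZMod (2 ^ a * d)) ≠ 0 → χ (m : ZMod (2 ^ a * d)) ≠ 0 →
      χ (n : ZMod (2 ^ a * d)) * χ (m : ZMod (2 ^ a * d)) = ((jacobiSym n d * jacobiSym m d : ℤ) : ℂ) := by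
    intro n m hm hnm hn0 hm0
    have h1 : n * m ≡ 1 [MOD 8] := by
      have h2 : n * m ≡ m * m [MOD 8] := hnm.mul_right m
      refine h2.trans ?_
      obtain ⟨k, rfl⟩ := hm
      have h3 : ∀ r : ZMod 8, (2 * r + 1) * (2 * r + 1) = 1 := by decide
      rw [← ZMod.natCast_eq_natCast_iff]
      push_cast
      exact h3 _
    have := key (n * m) h1 (by push_cast; rw [map_mul]; exact mul_ne_zero hn0 hm0)
    push_cast at this
    rw [map_mul] at this
    rw [this, jacobiSym.mul_left]
  have hJ : ∀ m : ℕ, χ (m : ZMod (2 ^ a * d)) ≠ 0 → jacobiSym m d = 1 ∨ jacobiSym m d = -1 := by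
    intro m hm
    have := (coe_ne_zero_coprime χ hm).coprime_mul_left_right
    exact jacobiSym.eq_one_or_neg_one (by simpa using this)
  classical
  let ψ : ZMod 8 → SignType := fun r =>
    if h : ∃ m : ℕ, Odd m ∧ χ (m : ZMod (2 ^ a * d)) ≠ 0 ∧ (m : ZMod 8) = r then
      (if χ (h.choose : ZMod (2 ^ a * d)) = ((jacobiSym h.choose d : ℤ) : ℂ) then 1 else -1) else 0
  refine ⟨ψ, fun n hn => ?_⟩
  by_cases hn0 : χ (n : ZMod (2 ^ a * d)) = 0
  · have : ¬ Nat.Coprime n (2 ^ a * d) := fun h => coprime_ne_zero χ h hn0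
    have h2 : ¬ Nat.Coprime n d := fun h => this (Nat.Coprime.mul_right (Nat.Coprime.pow_right _ (Nat.coprime_two_right.mpr hn)) h)
    have : NeZero d := ⟨hd0⟩
    have h3 : jacobiSym n d = 0 := jacobiSym.eq_zero_iff_not_coprime.mpr (by simpa using h2)
    rw [hn0, h3]; simp
  · have h : ∃ m : ℕ, Odd m ∧ χ (m : ZMod (2 ^ a * d)) ≠ 0 ∧ (m : ZMod 8) = n := ⟨n, hn, hn0, rfl⟩
    have hψ : ψ n = (if χ (h.choose : ZMod (2 ^ a * d)) = ((jacobiSym h.choose d : ℤ) : ℂ) then 1 else -1) := by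
      simp only [ψ]; rw [dif_pos h]
    rw [hψ]
    obtain ⟨h1, h2, h3⟩ := h.choose_spec
    generalize h.choose = m at *
    have h4 := key2 n m h1 ((ZMod.natCast_eq_natCast_iff _ _ _).mp h3.symm) hn0 h2
    rcases hJ n hn0 with e1 | e1 <;> rcases hJ m h2 with e2 | e2 <;> rcases quad_vals χ hq (m : ZMod (2 ^ a * d)) with e3 | e3 | e3 <;>
      rcases quad_vals χ hq (n : ZMod (2 ^ a * d)) with e4 | e4 | e4 <;>
      first
      | exact absurd e4 hn0
      | exact absurd e3 h2
      | (rw [e1, e2, e3, e4] at h4; norm_num at h4; done)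
      | (rw [e1, e2, e3, e4]; norm_num)


def jacChar (r : ℕ) [NeZero r] : DirichletCharacter ℂ r where
  toFun x := ((jacobiSym (x.val : ℤ) r : ℤ) : ℂ)
  map_one' := by
    have h : jacobiSym (((1 : ZMod r).val : ℕ) : ℤ) r = jacobiSym 1 r := by
      refine jacobiSym.mod_left' ?_
      rw [ZMod.val_one_eq_one_mod]; simp
    rw [h, jacobiSym.one_left]; simp
  map_mul' x y := by
    have h : jacobiSym (((x * y).val : ℕ) : ℤ) r = jacobiSym ((x.val : ℤ) * (y.val : ℤ)) r := by
      refine jacobiSym.mod_left' ?_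
      rw [ZMod.val_mul]; simp
    rw [h, jacobiSym.mul_left]; push_cast; rfl
  map_nonunit' x hx := by
    have : ¬ Nat.Coprime x.val r := by
      intro h; apply hx
      have := (ZMod.isUnit_iff_coprime x.val r).mpr h
      simpa using this
    have h3 : jacobiSym (x.val : ℤ) r = 0 := jacobiSym.eq_zero_iff_not_coprime.mpr (by rwa [Int.gcd_natCast_natCast])
    change ((jacobiSym (x.val : ℤ) r : ℤ) : ℂ) = 0
    rw [h3]; simp

lemma jacChar_apply (r : ℕ) [NeZero r] (n : ℕ) : jacChar r (n : ZMod r) = ((jacobiSym n r : ℤ) : ℂ) := by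
  change ((jacobiSym ((n : ZMod r).val : ℤ) r : ℤ) : ℂ) = _
  congr 1
  refine jacobiSym.mod_left' ?_
  rw [ZMod.val_natCast]; simp

lemma jacChar_sq (r : ℕ) [NeZero r] : jacChar r ^ 2 = 1 := by
  ext u
  rw [MulChar.pow_apply' _ two_ne_zero, MulChar.one_apply u.isUnit]
  change ((jacobiSym ((u : ZMod r).val : ℤ) r : ℤ) : ℂ) ^ 2 = 1
  have : Nat.Coprime (u : ZMod r).val r := ZMod.val_coe_unit_coprime u
  have := jacobiSym.sq_one (a := ((u : ZMod r).val : ℤ)) (b := r) (by rwa [Int.gcd_natCast_natCast])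
  exact_mod_cast this

lemma jac_exists_nonres (r p : ℕ) (hp : p.Prime) (hodd : Odd r) (hsq : Squarefree r) (m : ℕ) (hr : r = p * m) :
    ∃ g : ℕ, g ≡ 1 [MOD m] ∧ jacobiSym g r = -1 := by
  have : Fact p.Prime := ⟨hp⟩
  have hm0 : m ≠ 0 := by rintro rfl; simp at hr; exact hsq.ne_zero hr
  have hp2 : p ≠ 2 := by
    rintro rfl
    rw [hr] at hodd
    exact (Nat.not_even_iff_odd.mpr hodd) (even_two_mul m)
  have hcop : Nat.Coprime p m := by rw [hr] at hsq; exact Nat.coprime_of_squarefree_mul hsq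
  obtain ⟨a, ha⟩ := FiniteField.exists_nonsquare (F := ZMod p) (by rw [ZMod.ringChar_zmod_n]; exact hp2)
  obtain ⟨g, hg1, hg2⟩ := Nat.chineseRemainder hcop a.val 1
  refine ⟨g, hg2, ?_⟩
  have : NeZero p := ⟨hp.ne_zero⟩
  have : NeZero m := ⟨hm0⟩
  rw [hr, jacobiSym.mul_right, jacobiSym.mod_left' (Int.natCast_modEq_iff.mpr hg2), jacobiSym.mod_left' (Int.natCast_modEq_iff.mpr hg1)]
  rw [← jacobiSym.legendreSym.to_jacobiSym]
  have : legendreSym p (a.val : ℤ) = -1 := by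
    rw [legendreSym.eq_neg_one_iff]; simpa using ha
  rw [this]; simp

lemma jacChar_prim (r : ℕ) [NeZero r] (hodd : Odd r) (hsq : Squarefree r) : (jacChar r).IsPrimitive := by
  by_contra hc
  have hdvd := DirichletCharacter.conductor_dvd_level (jacChar r)
  obtain ⟨e, he⟩ := hdvd
  have he1 : e ≠ 1 := by
    rintro rfl; apply hc; rw [DirichletCharacter.IsPrimitive]; omega
  obtain ⟨p, hp, k, rfl⟩ := Nat.exists_prime_and_dvd he1
  set m := (jacChar r).conductor * k with hm
  have hr : r = p * m := by rw [hm]; conv_lhs => rw [he]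
                            ring
  obtain ⟨g, hg1, hg2⟩ := jac_exists_nonres r p hp hodd hsq m hr
  have hd : m ∣ r := Dvd.intro_left p hr.symm
  have hft : (jacChar r).FactorsThrough m :=
    (DirichletCharacter.mem_conductorSet_iff_conductor_dvd (jacChar r) hd).mpr (Dvd.intro _ rfl)
  rw [DirichletCharacter.factorsThrough_iff_ker_unitsMap hd] at hft
  have hgc : Nat.Coprime g r := by
    by_contra h
    have : jacobiSym g r = 0 := jacobiSym.eq_zero_iff_not_coprime.mpr (by simpa using h)
    omega
  have h1 : ZMod.unitOfCoprime g hgc ∈ (ZMod.unitsMap hd).ker := by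
    rw [MonoidHom.mem_ker]
    ext
    rw [ZMod.unitsMap_val, ZMod.coe_unitOfCoprime, Units.val_one, ZMod.cast_natCast hd, ← Nat.cast_one, ZMod.natCast_eq_natCast_iff]
    exact hg1
  have h2 := hft h1
  rw [MonoidHom.mem_ker] at h2
  have h3 := congrArg (fun u : ℂˣ => (u : ℂ)) h2
  simp only [MulChar.coe_toUnitHom, ZMod.coe_unitOfCoprime, Units.val_one, jacChar_apply, hg2] at h3
  norm_num at h3

lemma jacChar_ne_one (r : ℕ) [NeZero r] (hodd : Odd r) (hsq : Squarefree r) (hr : 1 < r) : jacChar r ≠ 1 := by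
  obtain ⟨p, hp, m, hm⟩ := Nat.exists_prime_and_dvd (n := r) (by omega)
  obtain ⟨g, hg1, hg2⟩ := jac_exists_nonres r p hp hodd hsq m hm
  intro h
  have h3 := congrArg (fun χ : DirichletCharacter ℂ r => χ (g : ZMod r)) h
  simp only [jacChar_apply, hg2] at h3
  by_cases hu : IsUnit (g : ZMod r)
  · rw [MulChar.one_apply hu] at h3; norm_num at h3
  · rw [MulChar.map_nonunit _ hu] at h3; norm_num at h3

open Finset in
lemma jac_ap (r : ℕ) (hodd : Odd r) (hsq : Squarefree r) (hr : 1 < r) (w c L h : ℕ) (hh : 0 < h)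
    (hw : Nat.Coprime w r) : |∑ j ∈ range L, (jacobiSym ((c + w * j : ℕ) : ℤ) r : ℝ)| ≤ 2 * h + r / √h := by
  have : NeZero r := ⟨by omega⟩
  have hu : IsUnit (w : ZMod r) := (ZMod.isUnit_iff_coprime w r).mpr hw
  obtain ⟨u, hu⟩ := hu
  have h1 := pv (jacChar r) (jacChar_prim r hodd hsq) (jacChar_sq r) (jacChar_ne_one r hodd hsq hr)
    ((c : ZMod r) * (u⁻¹ : (ZMod r)ˣ)) L h hh
  have h2 : ((∑ j ∈ range L, (jacobiSym ((c + w * j : ℕ) : ℤ) r : ℝ) : ℝ) : ℂ) =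
      jacChar r (w : ZMod r) * ∑ t ∈ range L, jacChar r ((t : ZMod r) + (c : ZMod r) * (u⁻¹ : (ZMod r)ˣ)) := by
    push_cast
    rw [Finset.mul_sum]
    refine Finset.sum_congr rfl fun j _ => ?_
    rw [← map_mul]
    have := jacChar_apply r (c + w * j)
    push_cast at this
    rw [← this]
    congr 1
    rw [← hu]
    have h3 : (u : ZMod r) * (u⁻¹ : (ZMod r)ˣ) = 1 := Units.mul_inv u
    linear_combination (-(c : ZMod r)) * h3
  rw [← Real.norm_eq_abs, ← Complex.norm_real, h2, norm_mul]
  exact (mul_le_of_le_one_left (norm_nonneg _) ((jacChar r).norm_le_one _)).trans h1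

open Finset in
lemma ap_reindex (F : ℕ → ℝ) (w c H : ℕ) (hc : c < w) :
    ∃ L, ∑ d ∈ range H with d % w = c, F d = ∑ j ∈ range L, F (c + w * j) := by
  refine ⟨(H + w - 1 - c) / w, ?_⟩
  have hlt : ∀ j, j < (H + w - 1 - c) / w ↔ c + w * j < H := by
    intro j
    rw [← Nat.succ_le_iff, Nat.le_div_iff_mul_le (by omega), Nat.succ_mul, mul_comm]
    generalize w * j = x
    omega
  symm
  refine Finset.sum_nbij' (fun j => c + w * j) (fun d => d / w) ?_ ?_ ?_ ?_ ?_
  · intro j hj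
    simp only [mem_range, hlt] at hj
    simp only [mem_filter, mem_range]
    exact ⟨hj, by rw [Nat.add_mul_mod_self_left, Nat.mod_eq_of_lt hc]⟩
  · intro d hd
    simp only [mem_filter, mem_range] at hd
    rw [mem_range, hlt]
    have := Nat.mod_add_div d w
    omega
  · intro j _
    rw [Nat.add_mul_div_left _ _ (by omega), Nat.div_eq_of_lt hc, zero_add]
  · intro d hd
    simp only [mem_filter, mem_range] at hd
    have := Nat.mod_add_div d w
    omega
  · intro j _; rfl

open Finset in
lemma jac_ap_div (r : ℕ) (hodd : Odd r) (hsq : Squarefree r) (hr : 1 < r) (c e H h : ℕ) (hh : 0 < h)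
    (hc : c < 4) (he : Odd e) : |∑ d ∈ range H with d % 4 = c ∧ e ∣ d, (jacobiSym (d : ℤ) r : ℝ)| ≤ 2 * h + r / √h := by
  have h0 : (0:ℝ) ≤ 2 * h + r / √h := by positivity
  by_cases her : Nat.Coprime e r
  · have h4e : Nat.Coprime 4 e := by
      have : Nat.Coprime (2^2) e := Nat.Coprime.pow_left 2 (Nat.coprime_two_left.mpr he)
      simpa using this
    have h4r : Nat.Coprime 4 r := by
      have : Nat.Coprime (2^2) r := Nat.Coprime.pow_left 2 (Nat.coprime_two_left.mpr hodd)
      simpa using this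
    obtain ⟨c', h1, h2⟩ := Nat.chineseRemainder h4e c 0
    have he0 : 0 < e := he.pos
    obtain ⟨L, hL⟩ := ap_reindex (fun d => (jacobiSym (d : ℤ) r : ℝ)) (4 * e) (c' % (4 * e)) H (Nat.mod_lt _ (by omega))
    have hf : (range H).filter (fun d => d % 4 = c ∧ e ∣ d) = (range H).filter (fun d => d % (4 * e) = c' % (4 * e)) := by
      refine Finset.filter_congr fun d _ => ?_
      change _ ↔ d ≡ c' [MOD 4 * e]
      rw [← Nat.modEq_and_modEq_iff_modEq_mul h4e]
      refine and_congr ?_ ?_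
      · have : d ≡ c' [MOD 4] ↔ d ≡ c [MOD 4] := ⟨fun h => h.trans h1, fun h => h.trans h1.symm⟩
        rw [this, Nat.ModEq, Nat.mod_eq_of_lt hc]
      · have : d ≡ c' [MOD e] ↔ d ≡ 0 [MOD e] := ⟨fun h => h.trans h2, fun h => h.trans h2.symm⟩
        rw [this, Nat.modEq_zero_iff_dvd]
    rw [hf, hL]
    exact jac_ap r hodd hsq hr _ _ L h hh (Nat.Coprime.mul_left h4r her)
  · rw [Finset.sum_eq_zero]
    · simpa using h0
    · intro d hd
      simp only [mem_filter] at hd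
      have : NeZero r := ⟨by omega⟩
      have h3 : jacobiSym (d : ℤ) r = 0 := jacobiSym.eq_zero_iff_not_coprime.mpr (by
        intro h
        exact her (Nat.Coprime.coprime_dvd_left hd.2.2 (by simpa using h)))
      simp [h3]

open Finset in
lemma moebius_coprime (b d : ℕ) (hb : b ≠ 0) :
    ∑ e ∈ b.divisors, (if e ∣ d then (ArithmeticFunction.moebius e : ℝ) else 0) = if Nat.Coprime b d then 1 else 0 := by
  rw [← Finset.sum_filter]
  have : b.divisors.filter (fun e => e ∣ d) = (Nat.gcd b d).divisors := by
    ext e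
    simp only [mem_filter, Nat.mem_divisors, Nat.dvd_gcd_iff]
    have : Nat.gcd b d ≠ 0 := Nat.gcd_ne_zero_left hb
    tauto
  rw [this]
  have h := congrArg (fun F : ArithmeticFunction ℤ => F (Nat.gcd b d)) ArithmeticFunction.coe_zeta_mul_moebius
  simp only [ArithmeticFunction.coe_zeta_mul_apply, ArithmeticFunction.one_apply] at h
  have h2 := congrArg (fun z : ℤ => (z : ℝ)) h
  push_cast at h2
  rw [h2]

open Finset in
lemma dside (k : ℕ) (hk : Odd k) (hns : ¬ IsSquare k) (H h : ℕ) (hh : 0 < h) :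
    |∑ d ∈ range H with Odd d, (jacobiSym (k : ℤ) d : ℝ)| ≤ 2 * k.divisors.card * (2 * h + k / √h) := by
  obtain ⟨a, b, hab, hsq⟩ := Nat.sq_mul_squarefree k
  have hk0 : 0 < k := hk.pos
  have hb0 : b ≠ 0 := by rintro rfl; simp at hab; omega
  have hao : Odd a := by rw [← hab] at hk; exact (Nat.odd_mul.mp hk).2
  have hbo : Odd b := by rw [← hab] at hk; exact Nat.Odd.of_mul_left (by rw [← sq]; exact (Nat.odd_mul.mp hk).1)
  have ha1 : 1 < a := by
    rcases Nat.lt_or_ge 1 a with h | h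
    · exact h
    · have : a = 1 := by have := hao.pos; omega
      subst this
      exact absurd ⟨b, by rw [← hab]; ring⟩ hns
  have hak : a ∣ k := Dvd.intro_left _ hab
  have hbk : b ∣ k := by rw [← hab, sq, mul_assoc]; exact Dvd.intro _ rfl
  have hpt : ∀ d : ℕ, Odd d → (jacobiSym (k : ℤ) d : ℝ) =
      ∑ e ∈ b.divisors, (if e ∣ d then (ArithmeticFunction.moebius e : ℝ) else 0) * ((jacobiSym (ZMod.χ₄ d) a : ℝ) * (jacobiSym (d : ℤ) a : ℝ)) := by
    intro d hd
    rw [← Finset.sum_mul, moebius_coprime b d hb0]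
    have h1 : jacobiSym (k : ℤ) d = jacobiSym (b : ℤ) d ^ 2 * jacobiSym (a : ℤ) d := by
      rw [← hab]; push_cast; rw [jacobiSym.mul_left, jacobiSym.pow_left]
    have h2 : jacobiSym (a : ℤ) d = jacobiSym (ZMod.χ₄ d) a * jacobiSym (d : ℤ) a := by
      rw [jacobiSym.quadratic_reciprocity' hao hd]; rfl
    have : NeZero d := ⟨hd.pos.ne'⟩
    rw [h1, h2]
    split_ifs with hc
    · rw [jacobiSym.sq_one (by simpa using hc)]; push_cast; ring
    · have : jacobiSym (b : ℤ) d = 0 := jacobiSym.eq_zero_iff_not_coprime.mpr (by simpa using hc)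
      rw [this]; simp
  have hinner : ∀ e ∈ b.divisors, |∑ d ∈ range H with Odd d, (if e ∣ d then (ArithmeticFunction.moebius e : ℝ) else 0) * ((jacobiSym (ZMod.χ₄ d) a : ℝ) * (jacobiSym (d : ℤ) a : ℝ))| ≤ 2 * (2 * h + a / √h) := by
    intro e he
    have heo : Odd e := hbo.of_dvd_nat (Nat.dvd_of_mem_divisors he)
    have hsplit : ∑ d ∈ range H with Odd d, (if e ∣ d then (ArithmeticFunction.moebius e : ℝ) else 0) * ((jacobiSym (ZMod.χ₄ d) a : ℝ) * (jacobiSym (d : ℤ) a : ℝ))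
       = ∑ c ∈ ({1, 3} : Finset ℕ), (ArithmeticFunction.moebius e : ℝ) * (jacobiSym (ZMod.χ₄ c) a : ℝ) * ∑ d ∈ range H with d % 4 = c ∧ e ∣ d, (jacobiSym (d : ℤ) a : ℝ) := by
      have h13 : ∀ d : ℕ, Odd d ↔ d % 4 ∈ ({1, 3} : Finset ℕ) := by
        intro d; simp only [mem_insert, mem_singleton, Nat.odd_iff]; omega
      rw [Finset.filter_congr (fun d _ => h13 d), ← Finset.sum_fiberwise_of_maps_to (t := ({1, 3} : Finset ℕ)) (g := fun d => d % 4) (by intro d hd; exact (mem_filter.mp hd).2)]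
      refine Finset.sum_congr rfl fun c hc => ?_
      rw [Finset.mul_sum, Finset.filter_filter]
      have e1 : (range H).filter (fun d => d % 4 = c ∧ e ∣ d) = ((range H).filter (fun d => d % 4 ∈ ({1, 3} : Finset ℕ) ∧ d % 4 = c)).filter (fun d => e ∣ d) := by
        ext d
        simp only [mem_filter]
        constructor
        · rintro ⟨h1, h2, h3⟩; exact ⟨⟨h1, h2 ▸ hc, h2⟩, h3⟩
        · rintro ⟨⟨h1, h2, h4⟩, h3⟩; exact ⟨h1, h4, h3⟩
      rw [e1, Finset.sum_filter (fun d => e ∣ d)]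
      refine Finset.sum_congr rfl fun d hd => ?_
      have hdc := (mem_filter.mp hd).2.2
      have : ZMod.χ₄ (d : ZMod 4) = ZMod.χ₄ (c : ZMod 4) := by
        rw [← hdc, ZMod.natCast_mod]
      rw [this]
      split_ifs <;> ring
    rw [hsplit, Finset.sum_pair (by norm_num)]
    have hmu : |(ArithmeticFunction.moebius e : ℝ)| ≤ 1 := by
      have := ArithmeticFunction.abs_moebius_le_one (n := e); exact_mod_cast this
    have hj : ∀ x : ℤ, |(jacobiSym x a : ℝ)| ≤ 1 := by
      intro x; rcases jacobiSym.trichotomy x a with h | h | h <;> simp [h]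
    have hterm : ∀ c < 4, |(ArithmeticFunction.moebius e : ℝ) * (jacobiSym (ZMod.χ₄ (c:ℕ)) a : ℝ) * ∑ d ∈ range H with d % 4 = c ∧ e ∣ d, (jacobiSym (d : ℤ) a : ℝ)| ≤ 2 * h + a / √h := by
      intro c hc
      rw [abs_mul, abs_mul]
      refine (mul_le_of_le_one_left (abs_nonneg _) ?_).trans (jac_ap_div a hao hsq ha1 c e H h hh hc heo)
      exact mul_le_one₀ hmu (abs_nonneg _) (hj _)
    refine (abs_add_le _ _).trans ?_
    linarith [hterm 1 (by norm_num), hterm 3 (by norm_num)]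
  rw [Finset.sum_congr rfl (fun d hd => hpt d (mem_filter.mp hd).2), Finset.sum_comm]
  refine (Finset.abs_sum_le_sum_abs _ _).trans ((Finset.sum_le_sum hinner).trans ?_)
  rw [Finset.sum_const, nsmul_eq_mul]
  have hcard : ((b.divisors.card : ℕ) : ℝ) ≤ k.divisors.card := by
    exact_mod_cast Finset.card_le_card (Nat.divisors_subset_of_dvd hk0.ne' hbk)
  have hak' : (a : ℝ) ≤ k := by exact_mod_cast Nat.le_of_dvd hk0 hak
  calc (b.divisors.card : ℝ) * (2 * (2 * h + a / √h)) ≤ k.divisors.card * (2 * (2 * h + k / √h)) := by gcongr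
    _ = _ := by ring


open Finset in
lemma divisor_bound (ε : ℝ) (hε : 0 < ε) :
    ∃ C : ℝ, 1 ≤ C ∧ ∀ n : ℕ, n ≠ 0 → (n.divisors.card : ℝ) ≤ C * (n : ℝ) ^ ε := by
  set K : ℝ := max 1 (1 / (ε * Real.log 2)) with hK
  have hl2 : 0 < Real.log 2 := Real.log_pos (by norm_num)
  have hK1 : 1 ≤ K := le_max_left _ _
  set P0 : ℕ := ⌈(2:ℝ) ^ (1 / ε)⌉₊ with hP0
  refine ⟨K ^ P0, one_le_pow₀ hK1, fun n hn => ?_⟩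
  have hloc : ∀ p ∈ n.primeFactors, ((n.factorization p + 1 : ℕ) : ℝ) ≤ (if p < P0 then K else 1) * ((p : ℝ) ^ (n.factorization p)) ^ ε := by
    intro p hp
    have hpp := Nat.prime_of_mem_primeFactors hp
    set v := n.factorization p
    have hp2 : (2:ℝ) ≤ p := by exact_mod_cast hpp.two_le
    rw [← Real.rpow_natCast, ← Real.rpow_mul (by positivity)]
    split_ifs with hlt
    · have h1 : (2:ℝ) ^ (v * ε) ≤ (p:ℝ) ^ (v * ε) := Real.rpow_le_rpow (by norm_num) hp2 (by positivity)
      have h2 : 1 + ε * v * Real.log 2 ≤ (2:ℝ) ^ (v * ε) := by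
        rw [Real.rpow_def_of_pos (by norm_num)]
        have := Real.add_one_le_exp (Real.log 2 * (v * ε))
        linarith
      have h3 : (v:ℝ) ≤ K * (ε * v * Real.log 2) := by
        have : 1 ≤ K * (ε * Real.log 2) := by
          have h4 := le_max_right 1 (1 / (ε * Real.log 2))
          rw [← hK, div_le_iff₀ (by positivity)] at h4
          exact h4
        nlinarith [(Nat.cast_nonneg v : (0:ℝ) ≤ v)]
      push_cast
      nlinarith
    · push Not at hlt
      have h1 : (2:ℝ) ^ (1/ε) ≤ p := (Nat.le_ceil _).trans (by exact_mod_cast hlt)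
      have h2 : (2:ℝ) ^ (v:ℝ) ≤ (p:ℝ) ^ (v * ε) := by
        calc (2:ℝ) ^ (v:ℝ) = ((2:ℝ) ^ (1/ε)) ^ (v * ε) := by
              rw [← Real.rpow_mul (by norm_num)]; congr 1; field_simp
          _ ≤ _ := Real.rpow_le_rpow (by positivity) h1 (by positivity)
      rw [one_mul]
      refine le_trans ?_ h2
      rw [Real.rpow_natCast]
      exact_mod_cast Nat.lt_two_pow_self
  rw [Nat.card_divisors hn]
  have hn' : (n:ℝ) = ∏ p ∈ n.primeFactors, (p:ℝ) ^ (n.factorization p) := by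
    conv_lhs => rw [← Nat.factorization_prod_pow_eq_self hn]
    rw [Finsupp.prod]; push_cast; rfl
  conv_rhs => rw [hn']
  rw [← Real.finsetProd_rpow _ _ (fun i _ => by positivity)]
  push_cast
  push_cast at hloc
  refine (Finset.prod_le_prod (fun _ _ => by positivity) hloc).trans ?_
  rw [Finset.prod_mul_distrib]
  gcongr
  rw [Finset.prod_ite, Finset.prod_const_one, mul_one, Finset.prod_const]
  refine pow_le_pow_right₀ hK1 ?_
  calc _ ≤ (range P0).card := Finset.card_le_card (fun p hp => by simp only [mem_filter] at hp; simpa using hp.2)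
    _ = P0 := card_range _


open Finset in
lemma jac_abs_le (x : ℤ) (a : ℕ) : |(jacobiSym x a : ℝ)| ≤ 1 := by
  rcases jacobiSym.trichotomy x a with h | h | h <;> simp [h]

open Finset in
lemma msq_expand (S : Finset ℕ) (a : ℕ → ℝ) (H : ℕ) (Bnd : ℝ) (hB0 : 0 ≤ Bnd)
    (hB : ∀ n ∈ S, ∀ m ∈ S, ¬ IsSquare (n * m) → |∑ d ∈ range H with Odd d, (jacobiSym ((n * m : ℕ) : ℤ) d : ℝ)| ≤ Bnd) :
    ∑ d ∈ range H with Odd d, (∑ n ∈ S, a n * (jacobiSym (n : ℤ) d : ℝ)) ^ 2 ≤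
      H * (∑ x ∈ (S ×ˢ S) with IsSquare (x.1 * x.2), |a x.1| * |a x.2|) + Bnd * (∑ n ∈ S, |a n|) ^ 2 := by
  have h1 : ∑ d ∈ range H with Odd d, (∑ n ∈ S, a n * (jacobiSym (n : ℤ) d : ℝ)) ^ 2 =
      ∑ x ∈ S ×ˢ S, a x.1 * a x.2 * ∑ d ∈ range H with Odd d, (jacobiSym ((x.1 * x.2 : ℕ) : ℤ) d : ℝ) := by
    have h0 : ∀ d : ℕ, (∑ n ∈ S, a n * (jacobiSym (n : ℤ) d : ℝ)) ^ 2 = ∑ x ∈ S ×ˢ S, (a x.1 * (jacobiSym (x.1 : ℤ) d : ℝ)) * (a x.2 * (jacobiSym (x.2 : ℤ) d : ℝ)) := by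
      intro d
      rw [sq, Finset.sum_mul_sum, ← Finset.sum_product']
    simp_rw [h0, Finset.mul_sum]
    rw [Finset.sum_comm]
    refine Finset.sum_congr rfl fun x _ => Finset.sum_congr rfl fun d _ => ?_
    push_cast
    rw [jacobiSym.mul_left]; push_cast; ring
  rw [h1]
  have h2 : ∀ x ∈ S ×ˢ S, a x.1 * a x.2 * ∑ d ∈ range H with Odd d, (jacobiSym ((x.1 * x.2 : ℕ) : ℤ) d : ℝ) ≤
      (if IsSquare (x.1 * x.2) then H * (|a x.1| * |a x.2|) else 0) + Bnd * (|a x.1| * |a x.2|) := by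
    intro x hx
    rw [mem_product] at hx
    refine (le_abs_self _).trans ?_
    rw [abs_mul, abs_mul]
    have h0 : 0 ≤ |a x.1| * |a x.2| := by positivity
    split_ifs with hs
    · have : |∑ d ∈ range H with Odd d, (jacobiSym ((x.1 * x.2 : ℕ) : ℤ) d : ℝ)| ≤ H := by
        refine (Finset.abs_sum_le_sum_abs _ _).trans ?_
        refine (Finset.sum_le_sum (fun d _ => jac_abs_le _ _)).trans ?_
        rw [Finset.sum_const, nsmul_eq_mul, mul_one]
        have := Finset.card_filter_le (range H) (fun d => Odd d)
        rw [card_range] at this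
        exact_mod_cast this
      nlinarith
    · have := hB x.1 hx.1 x.2 hx.2 hs
      nlinarith
  refine (Finset.sum_le_sum h2).trans ?_
  rw [Finset.sum_add_distrib, ← Finset.sum_filter, ← Finset.mul_sum, ← Finset.mul_sum]
  have h3 : (∑ n ∈ S, |a n|) ^ 2 = ∑ x ∈ S ×ˢ S, |a x.1| * |a x.2| := by
    rw [sq, Finset.sum_mul_sum, ← Finset.sum_product']
  rw [h3]

open Finset in
lemma sum_tail_32 (y : ℕ) (hy : 0 < y) (M : ℕ) : ∑ k ∈ Ioc y M, ((k:ℝ) ^ (-(3/2) : ℝ)) ≤ 2 / √y := by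
  have h : ∀ M, y ≤ M → ∑ k ∈ Ioc y M, ((k:ℝ) ^ (-(3/2) : ℝ)) ≤ 2 / √y - 2 / √M := by
    intro M hM
    induction M, hM using Nat.le_induction with
    | base => simp
    | succ M hM ih =>
      rw [← Finset.insert_Ioc_right_eq_Ioc_add_one hM, Finset.sum_insert (by simp)]
      have hM0 : (0:ℝ) < M := by exact_mod_cast (by omega)
      set u := √(M:ℝ) with hu
      set v := √((M+1 : ℕ):ℝ) with hv
      have hu0 : 0 < u := by positivity
      have hv0 : 0 < v := by positivity
      have hv2 : v ^ 2 = u ^ 2 + 1 := by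
        rw [hu, hv, Real.sq_sqrt (by positivity), Real.sq_sqrt (by positivity)]; push_cast; ring
      have huv : u ≤ v := Real.sqrt_le_sqrt (by push_cast; linarith)
      have e : ((M+1 : ℕ):ℝ) ^ (-(3/2) : ℝ) = 1 / v ^ 3 := by
        rw [hv, Real.sqrt_eq_rpow, ← Real.rpow_natCast, ← Real.rpow_mul (by positivity), Real.rpow_neg (by positivity), one_div]
        norm_num
      rw [e]
      have : 1 / v ^ 3 ≤ 2 / u - 2 / v := by
        rw [div_sub_div _ _ hu0.ne' hv0.ne', div_le_div_iff₀ (by positivity) (by positivity)]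
        have h1 : (v - u) * (v + u) = 1 := by nlinarith
        have h2 : 1 ≤ (v - u) * (2 * v) := by nlinarith
        have h3 : v ≤ (v - u) * (2 * v) * v := by nlinarith
        nlinarith [mul_nonneg (mul_nonneg hu0.le hv0.le) (sub_nonneg.mpr huv), mul_pos hu0 hv0, mul_le_mul_of_nonneg_left h2 (show 0 ≤ v^2 by positivity)]
      linarith
  rcases le_total y M with hM | hM
  · have := h M hM
    have : (0:ℝ) ≤ 2 / √M := by positivity
    linarith
  · rw [Finset.Ioc_eq_empty (by omega), Finset.sum_empty]; positivity

open Finset in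
lemma diag_bound : ∃ C : ℝ, 0 < C ∧ ∀ (S : Finset ℕ) (y : ℕ), 0 < y → (∀ n ∈ S, y < n) →
    ∑ x ∈ (S ×ˢ S) with IsSquare (x.1 * x.2), ((x.1.divisors.card : ℝ) / x.1) * ((x.2.divisors.card : ℝ) / x.2) ≤ C / √y := by
  obtain ⟨C, hC1, hC⟩ := divisor_bound (1/8) (by norm_num)
  refine ⟨2 * C ^ 3, by positivity, fun S y hy hS => ?_⟩
  set M := S.sup id with hM
  have hSM : ∀ n ∈ S, n ≤ M := fun n hn => Finset.le_sup (f := id) hn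
  have hmap : ∀ x ∈ (S ×ˢ S).filter (fun x => IsSquare (x.1 * x.2)), Nat.sqrt (x.1 * x.2) ∈ Ioc y M := by
    intro x hx
    simp only [mem_filter, mem_product] at hx
    rw [mem_Ioc]
    have h1 := hS _ hx.1.1; have h2 := hS _ hx.1.2
    have h3 := hSM _ hx.1.1; have h4 := hSM _ hx.1.2
    constructor
    · have : y + 1 ≤ Nat.sqrt (x.1 * x.2) := Nat.le_sqrt.mpr (Nat.mul_le_mul h1 h2)
      omega
    · have := Nat.sqrt_le_sqrt (Nat.mul_le_mul h3 h4)
      rwa [Nat.sqrt_eq] at this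
  rw [← Finset.sum_fiberwise_of_maps_to hmap]
  have hk : ∀ k ∈ Ioc y M, ∑ x ∈ ((S ×ˢ S).filter (fun x => IsSquare (x.1 * x.2))) with Nat.sqrt (x.1 * x.2) = k, ((x.1.divisors.card : ℝ) / x.1) * ((x.2.divisors.card : ℝ) / x.2) ≤ C ^ 3 * (k:ℝ) ^ (-(3/2) : ℝ) := by
    intro k hk
    have hk0 : 0 < k := by rw [mem_Ioc] at hk; omega
    have hkr : (0:ℝ) < k := by exact_mod_cast hk0
    have hterm : ∀ x ∈ ((S ×ˢ S).filter (fun x => IsSquare (x.1 * x.2))).filter (fun x => Nat.sqrt (x.1 * x.2) = k), ((x.1.divisors.card : ℝ) / x.1) * ((x.2.divisors.card : ℝ) / x.2) ≤ C ^ 2 * (k:ℝ) ^ (-(7/4) : ℝ) := by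
      intro x hx
      simp only [mem_filter, mem_product] at hx
      have h1 : 0 < x.1 := by have := hS _ hx.1.1.1; omega
      have h2 : 0 < x.2 := by have := hS _ hx.1.1.2; omega
      have h1r : (0:ℝ) < x.1 := by exact_mod_cast h1
      have h2r : (0:ℝ) < x.2 := by exact_mod_cast h2
      obtain ⟨s, hs⟩ := hx.1.2
      have hks : k = s := by rw [← hx.2, hs, Nat.sqrt_eq]
      rw [← hks] at hs
      have hsr : (x.1:ℝ) * x.2 = k * k := by exact_mod_cast hs
      calc _ ≤ (C * (x.1:ℝ) ^ (1/8:ℝ) / x.1) * (C * (x.2:ℝ) ^ (1/8:ℝ) / x.2) := by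
            have := hC x.1 h1.ne'
            have := hC x.2 h2.ne'
            gcongr
        _ = C ^ 2 * (((x.1:ℝ) * x.2) ^ (1/8:ℝ) / (x.1 * x.2)) := by
            rw [Real.mul_rpow h1r.le h2r.le]; field_simp
        _ = C ^ 2 * (k:ℝ) ^ (-(7/4) : ℝ) := by
            rw [hsr, ← sq, ← Real.rpow_natCast (k:ℝ), ← Real.rpow_mul hkr.le, ← Real.rpow_sub hkr]; norm_num
    have hcard : (((((S ×ˢ S).filter (fun x => IsSquare (x.1 * x.2))).filter (fun x => Nat.sqrt (x.1 * x.2) = k)).card : ℕ) : ℝ) ≤ C * (k:ℝ) ^ (1/4:ℝ) := by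
      have h1 : (((S ×ˢ S).filter (fun x => IsSquare (x.1 * x.2))).filter (fun x => Nat.sqrt (x.1 * x.2) = k)).card ≤ (k ^ 2).divisors.card := by
        have key : ∀ x ∈ ((S ×ˢ S).filter (fun x => IsSquare (x.1 * x.2))).filter (fun x => Nat.sqrt (x.1 * x.2) = k), x.1 * x.2 = k ^ 2 ∧ 0 < x.1 := by
          intro x hx
          simp only [mem_filter, mem_product] at hx
          obtain ⟨s, hs⟩ := hx.1.2
          have hks : k = s := by rw [← hx.2, hs, Nat.sqrt_eq]
          refine ⟨by rw [hs, hks]; ring, ?_⟩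
          have := hS _ hx.1.1.1; omega
        refine Finset.card_le_card_of_injOn (fun x => x.1) ?_ ?_
        · intro x hx
          have := key x hx
          simp only [coe_sort_coe, mem_coe, Nat.mem_divisors]
          exact ⟨Dvd.intro _ this.1, by positivity⟩
        · intro x hx z hz hxz
          have h1 := key x hx
          have h2 := key z hz
          simp only at hxz
          refine Prod.ext hxz ?_
          rw [← hxz, ← h1.1] at h2
          exact (Nat.eq_of_mul_eq_mul_left h1.2 h2.1).symm
      have h2 := hC (k ^ 2) (by positivity)
      push_cast at h2
      rw [← Real.rpow_natCast, ← Real.rpow_mul hkr.le] at h2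
      norm_num at h2
      refine le_trans (by exact_mod_cast h1) (h2.trans (by norm_num))
    refine (Finset.sum_le_card_nsmul _ _ _ hterm).trans ?_
    rw [nsmul_eq_mul]
    calc _ ≤ (C * (k:ℝ) ^ (1/4:ℝ)) * (C ^ 2 * (k:ℝ) ^ (-(7/4) : ℝ)) := by gcongr
      _ = C ^ 3 * ((k:ℝ) ^ (1/4:ℝ) * (k:ℝ) ^ (-(7/4) : ℝ)) := by ring
      _ = _ := by rw [← Real.rpow_add hkr]; norm_num
  refine (Finset.sum_le_sum hk).trans ?_
  rw [← Finset.mul_sum]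
  calc _ ≤ C ^ 3 * (2 / √y) := by
        have := sum_tail_32 y hy M
        gcongr
    _ = _ := by ring

open Finset in
lemma msq : ∃ C : ℝ, 0 < C ∧ ∀ i : ℕ, 1 ≤ i → ∀ (S : Finset ℕ) (a : ℕ → ℝ) (H : ℕ),
    (∀ n ∈ S, Odd n ∧ i ^ 4 < n ∧ n ≤ (2 ^ i) ^ 43) → (∀ n ∈ S, |a n| ≤ (n.divisors.card : ℝ) / n) →
    ∑ d ∈ range H with Odd d, (∑ n ∈ S, a n * (jacobiSym (n : ℤ) d : ℝ)) ^ 2 ≤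
      C * H / i ^ 2 + C * ((2:ℝ) ^ i) ^ 59 := by
  obtain ⟨C1, hC1, hdiag⟩ := diag_bound
  obtain ⟨C2, hC21, hC2⟩ := divisor_bound (1/344) (by norm_num)
  -- constant absorbing the logs
  obtain ⟨C3, hC3, hlog⟩ : ∃ C3 : ℝ, 0 < C3 ∧ ∀ i : ℕ, (1 + 43 * (i:ℝ)) ^ 2 ≤ C3 * ((2:ℝ) ^ i) ^ (1/2 : ℝ) := by
    have h1 : ∀ i : ℕ, 1 + (i:ℝ) * (Real.log 2 / 8) ≤ ((2:ℝ) ^ i) ^ (1/8 : ℝ) := by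
      intro i
      rw [← Real.rpow_natCast, ← Real.rpow_mul (by norm_num), Real.rpow_def_of_pos (by norm_num)]
      have := Real.add_one_le_exp (Real.log 2 * ((i:ℝ) * (1/8)))
      linarith
    have hl : 0 < Real.log 2 := Real.log_pos (by norm_num)
    have hl1 : Real.log 2 < 1 := by have := Real.log_two_lt_d9; linarith
    refine ⟨(43 * 8 / Real.log 2) ^ 2, by positivity, fun i => ?_⟩
    have h2 : 1 + 43 * (i:ℝ) ≤ (43 * 8 / Real.log 2) * ((2:ℝ) ^ i) ^ (1/8 : ℝ) := by
      refine le_trans ?_ (mul_le_mul_of_nonneg_left (h1 i) (by positivity))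
      rw [mul_add, mul_one]
      have : 1 ≤ 43 * 8 / Real.log 2 := by rw [le_div_iff₀ hl]; linarith
      have e : 43 * 8 / Real.log 2 * ((i:ℝ) * (Real.log 2 / 8)) = 43 * i := by field_simp
      linarith
    calc (1 + 43 * (i:ℝ)) ^ 2 ≤ ((43 * 8 / Real.log 2) * ((2:ℝ) ^ i) ^ (1/8 : ℝ)) ^ 2 := by gcongr
      _ = (43 * 8 / Real.log 2) ^ 2 * ((2:ℝ) ^ i) ^ (1/4 : ℝ) := by
          rw [mul_pow, ← Real.rpow_natCast (((2:ℝ) ^ i) ^ (1/8 : ℝ)), ← Real.rpow_mul (by positivity)]; norm_num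
      _ ≤ _ := by
          gcongr
          · exact one_le_pow₀ (by norm_num)
          · norm_num
  refine ⟨C1 + 6 * C2 ^ 3 * C3, by positivity, fun i hi S a H hS ha => ?_⟩
  set T : ℝ := (2:ℝ) ^ i with hT
  have hT1 : 1 ≤ T := one_le_pow₀ (by norm_num)
  have hT0 : 0 < T := by positivity
  have hQ : ∀ n ∈ S, 0 < n ∧ (n:ℝ) ≤ T ^ 43 := fun n hn => ⟨(hS n hn).1.pos, by
    have := (hS n hn).2.2
    rw [hT]; exact_mod_cast this⟩
  have hB : ∀ n ∈ S, ∀ m ∈ S, ¬ IsSquare (n * m) → |∑ d ∈ range H with Odd d, (jacobiSym ((n * m : ℕ) : ℤ) d : ℝ)| ≤ 6 * C2 * T ^ (1/4:ℝ) * T ^ 58 := by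
    intro n hn m hm hsq
    have h1 := dside (n * m) ((hS n hn).1.mul (hS m hm).1) hsq H ((2 ^ i) ^ 58) (by positivity)
    refine h1.trans ?_
    have hnm : ((n * m : ℕ) : ℝ) ≤ T ^ 86 := by
      push_cast
      calc (n:ℝ) * m ≤ T ^ 43 * T ^ 43 := mul_le_mul (hQ n hn).2 (hQ m hm).2 (by positivity) (by positivity)
        _ = _ := by ring
    have h2 : (((n * m).divisors.card : ℕ) : ℝ) ≤ C2 * T ^ (1/4:ℝ) := by
      refine (hC2 _ (Nat.mul_pos (hQ n hn).1 (hQ m hm).1).ne').trans ?_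
      gcongr
      calc ((n * m : ℕ) : ℝ) ^ (1/344 : ℝ) ≤ (T ^ 86) ^ (1/344 : ℝ) := Real.rpow_le_rpow (by positivity) hnm (by norm_num)
        _ = T ^ (1/4:ℝ) := by rw [← Real.rpow_natCast, ← Real.rpow_mul hT0.le]; norm_num
    have h3 : 2 * (((2 ^ i) ^ 58 : ℕ) : ℝ) + ((n * m : ℕ) : ℝ) / √(((2 ^ i) ^ 58 : ℕ) : ℝ) ≤ 3 * T ^ 58 := by
      have e : (((2 ^ i) ^ 58 : ℕ) : ℝ) = T ^ 58 := by push_cast; rfl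
      rw [e]
      have e2 : √(T ^ 58) = T ^ 29 := by
        rw [show T ^ 58 = (T ^ 29) ^ 2 by ring, Real.sqrt_sq (by positivity)]
      rw [e2]
      have : ((n * m : ℕ) : ℝ) / T ^ 29 ≤ T ^ 57 := by
        rw [div_le_iff₀ (by positivity)]
        refine hnm.trans (le_of_eq (by ring))
      have : T ^ 57 ≤ T ^ 58 := pow_le_pow_right₀ hT1 (by norm_num)
      linarith
    calc _ ≤ 2 * (C2 * T ^ (1/4:ℝ)) * (3 * T ^ 58) := by gcongr
      _ = _ := by ring
  have hexp := msq_expand S a H (6 * C2 * T ^ (1/4:ℝ) * T ^ 58) (by positivity) hB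
  refine hexp.trans ?_
  have hd : ∑ x ∈ (S ×ˢ S) with IsSquare (x.1 * x.2), |a x.1| * |a x.2| ≤ C1 / i ^ 2 := by
    have := hdiag S (i ^ 4) (by positivity) (fun n hn => (hS n hn).2.1)
    have e : √((i ^ 4 : ℕ) : ℝ) = (i:ℝ) ^ 2 := by
      push_cast
      rw [show (i:ℝ) ^ 4 = ((i:ℝ) ^ 2) ^ 2 by ring, Real.sqrt_sq (by positivity)]
    rw [e] at this
    refine le_trans (Finset.sum_le_sum fun x hx => ?_) this
    simp only [mem_filter, mem_product] at hx
    exact mul_le_mul (ha _ hx.1.1) (ha _ hx.1.2) (abs_nonneg _) (by positivity)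
  have hs : ∑ n ∈ S, |a n| ≤ C2 * T ^ (1/8:ℝ) * (1 + 43 * i) := by
    have h1 : ∀ n ∈ S, |a n| ≤ C2 * T ^ (1/8:ℝ) * (1 / n) := by
      intro n hn
      refine (ha n hn).trans ?_
      have : (n.divisors.card : ℝ) ≤ C2 * T ^ (1/8:ℝ) := by
        refine (hC2 n (hQ n hn).1.ne').trans ?_
        gcongr
        calc (n : ℝ) ^ (1/344 : ℝ) ≤ (T ^ 43) ^ (1/344 : ℝ) := Real.rpow_le_rpow (by positivity) (hQ n hn).2 (by norm_num)
          _ = T ^ (1/8:ℝ) := by rw [← Real.rpow_natCast, ← Real.rpow_mul hT0.le]; norm_num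
      rw [mul_one_div]
      gcongr
    refine (Finset.sum_le_sum h1).trans ?_
    rw [← Finset.mul_sum]
    have hsub : S ⊆ Icc 1 ((2 ^ i) ^ 43) := fun n hn => by
      rw [mem_Icc]; exact ⟨(hQ n hn).1, (hS n hn).2.2⟩
    have hharm : ∑ n ∈ S, (1 / (n:ℝ)) ≤ 1 + 43 * i := by
      refine (Finset.sum_le_sum_of_subset_of_nonneg hsub (fun _ _ _ => by positivity)).trans ?_
      have := harmonic_le_one_add_log ((2 ^ i) ^ 43)
      rw [harmonic_eq_sum_Icc] at this
      push_cast at this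
      simp only [one_div]
      refine this.trans ?_
      rw [Real.log_pow, Real.log_pow]
      have hl1 : Real.log 2 < 1 := by have := Real.log_two_lt_d9; linarith
      have : (i:ℝ) * Real.log 2 ≤ i := mul_le_of_le_one_right (by positivity) hl1.le
      push_cast
      linarith
    gcongr
  have hs2 : (∑ n ∈ S, |a n|) ^ 2 ≤ C2 ^ 2 * T ^ (1/4:ℝ) * (C3 * T ^ (1/2:ℝ)) := by
    calc (∑ n ∈ S, |a n|) ^ 2 ≤ (C2 * T ^ (1/8:ℝ) * (1 + 43 * i)) ^ 2 := by
          have : 0 ≤ ∑ n ∈ S, |a n| := Finset.sum_nonneg fun _ _ => abs_nonneg _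
          gcongr
      _ = C2 ^ 2 * T ^ (1/4:ℝ) * (1 + 43 * i) ^ 2 := by
          rw [mul_pow, mul_pow, ← Real.rpow_natCast (T ^ (1/8:ℝ)), ← Real.rpow_mul hT0.le]; norm_num
      _ ≤ _ := by
          have := hlog i
          gcongr
  have e : T ^ (1/4:ℝ) * T ^ (1/4:ℝ) * T ^ (1/2:ℝ) = T := by
    rw [← Real.rpow_add hT0, ← Real.rpow_add hT0]; norm_num
  have hoff : 6 * C2 * T ^ (1/4:ℝ) * T ^ 58 * (∑ n ∈ S, |a n|) ^ 2 ≤ 6 * C2 ^ 3 * C3 * T ^ 59 := by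
    calc _ ≤ 6 * C2 * T ^ (1/4:ℝ) * T ^ 58 * (C2 ^ 2 * T ^ (1/4:ℝ) * (C3 * T ^ (1/2:ℝ))) := by gcongr
      _ = 6 * C2 ^ 3 * C3 * T ^ 58 * (T ^ (1/4:ℝ) * T ^ (1/4:ℝ) * T ^ (1/2:ℝ)) := by ring
      _ = _ := by rw [e]; ring
  have hdd : (H:ℝ) * (∑ x ∈ (S ×ˢ S) with IsSquare (x.1 * x.2), |a x.1| * |a x.2|) ≤ C1 * H / i ^ 2 := by
    calc _ ≤ (H:ℝ) * (C1 / i ^ 2) := by gcongr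
      _ = _ := by ring
  have p1 : 0 ≤ 6 * C2 ^ 3 * C3 * H / (i:ℝ) ^ 2 := by positivity
  have p2 : 0 ≤ C1 * T ^ 59 := by positivity
  have : (C1 + 6 * C2 ^ 3 * C3) * H / (i:ℝ) ^ 2 = C1 * H / i ^ 2 + 6 * C2 ^ 3 * C3 * H / (i:ℝ) ^ 2 := by ring
  rw [this, add_mul]
  linarith


def oddPr (i : ℕ) : Finset ℕ := (Finset.range (i ^ 4 + 1)).filter (fun p => p.Prime ∧ p ≠ 2)

def sieveP (i : ℕ) : ℕ := ∏ p ∈ oddPr i, p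

def mollA (i : ℕ) : Finset ℕ := (sieveP i).divisors.filter (fun a => a ≤ 2 ^ i)

def oddB (i : ℕ) : Finset ℕ := (Finset.range ((2 ^ i) ^ 42)).filter (fun b => Odd b)

def suppS (i : ℕ) : Finset ℕ := (Finset.range ((2 ^ i) ^ 43 + 1)).filter (fun n => Odd n ∧ i ^ 4 < n)

open Finset in
def mollC (i n : ℕ) : ℤ := ∑ x ∈ (mollA i ×ˢ oddB i) with x.1 * x.2 = n, ArithmeticFunction.moebius x.1

def BadD (i d : ℕ) : Prop := ∃ ψ : ZMod 8 → SignType,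
  1 / 4 < |∑ n ∈ suppS i, ((mollC i n : ℝ) * ((ψ (n : ZMod 8) : ℤ) : ℝ) / n) * (jacobiSym (n : ℤ) d : ℝ)|

lemma sieveP_pos (i : ℕ) : 0 < sieveP i :=
  Finset.prod_pos fun p hp => (Finset.mem_filter.mp hp).2.1.pos

lemma sieveP_odd (i : ℕ) : Odd (sieveP i) := by
  unfold sieveP
  refine Finset.prod_induction _ Odd (fun _ _ => Odd.mul) odd_one fun p hp => ?_
  have := (Finset.mem_filter.mp hp).2
  exact this.1.odd_of_ne_two this.2

lemma dvd_sieveP {i a : ℕ} (hs : Squarefree a) (ho : Odd a) (ha : a ≤ i ^ 4) : a ∣ sieveP i := by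
  have h1 : ∏ p ∈ a.primeFactors, p = a := Nat.prod_primeFactors_of_squarefree hs
  rw [← h1]
  unfold sieveP
  refine Finset.prod_dvd_prod_of_subset _ _ _ fun p hp => ?_
  have hpp := Nat.prime_of_mem_primeFactors hp
  have hd := Nat.dvd_of_mem_primeFactors hp
  refine Finset.mem_filter.mpr ⟨Finset.mem_range.mpr ?_, hpp, ?_⟩
  · have := Nat.le_of_dvd ho.pos hd; omega
  · rintro rfl
    exact (Nat.not_even_iff_odd.mpr ho) (even_iff_two_dvd.mpr hd)

lemma pow4_lt_two_pow (i : ℕ) (hi : 20 ≤ i) : i ^ 4 < 2 ^ i := by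
  induction i, hi using Nat.le_induction with
  | base => norm_num
  | succ n hn ih =>
    rw [pow_succ 2]
    have : (n+1)^4 ≤ 2 * n^4 := by nlinarith [sq_nonneg (n:ℤ), Nat.pow_le_pow_left hn 2, Nat.pow_le_pow_left hn 3, Nat.pow_le_pow_left hn 4, mul_le_mul_left hn (n^3), mul_le_mul_left hn (n^2), mul_le_mul_left hn n]
    omega

open Finset in
lemma mollC_abs (i n : ℕ) (hn : n ≠ 0) : |(mollC i n : ℝ)| ≤ n.divisors.card := by
  have h : |mollC i n| ≤ n.divisors.card := by
    unfold mollC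
    refine (Finset.abs_sum_le_sum_abs _ _).trans ?_
    refine (Finset.sum_le_card_nsmul _ _ 1 (fun x _ => ArithmeticFunction.abs_moebius_le_one)).trans ?_
    rw [nsmul_eq_mul, mul_one]
    norm_cast
    refine Finset.card_le_card_of_injOn (fun x => x.1) ?_ ?_
    · intro x hx
      have h1 := (mem_filter.mp hx).2
      simp only [mem_coe, Nat.mem_divisors]
      exact ⟨Dvd.intro _ h1, hn⟩
    · intro x hx z hz hxz
      have h1 := (mem_filter.mp hx).2
      have h2 := (mem_filter.mp hz).2
      simp only at hxz
      refine Prod.ext hxz ?_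
      rw [← hxz, ← h1] at h2
      have h0 : x.1 ≠ 0 := by
        intro h; rw [h, zero_mul] at h1; exact hn h1.symm
      exact (Nat.eq_of_mul_eq_mul_left (Nat.pos_of_ne_zero h0) h2).symm
  exact_mod_cast h

open Finset in
lemma mollC_small (i n : ℕ) (hi : 20 ≤ i) (ho : Odd n) (hn : n ≤ i ^ 4) : mollC i n = if n = 1 then 1 else 0 := by
  have h := congrArg (fun F : ArithmeticFunction ℤ => F n) ArithmeticFunction.moebius_mul_coe_zeta
  simp only [ArithmeticFunction.one_apply] at h
  rw [← h, ArithmeticFunction.mul_apply]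
  unfold mollC
  have hlt := pow4_lt_two_pow i hi
  have hsub : (mollA i ×ˢ oddB i).filter (fun x => x.1 * x.2 = n) ⊆ n.divisorsAntidiagonal := by
    intro x hx
    rw [Nat.mem_divisorsAntidiagonal]
    exact ⟨(mem_filter.mp hx).2, ho.pos.ne'⟩
  rw [← Finset.sum_subset hsub]
  · refine Finset.sum_congr rfl fun x hx => ?_
    have : x.2 ≠ 0 := by
      have := (mem_filter.mp hx).2
      rintro h; rw [h] at this; simp at this; have := ho.pos; omega
    simp [this]
  · intro x hx hx2
    rw [Nat.mem_divisorsAntidiagonal] at hx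
    by_cases hs : Squarefree x.1
    · exfalso; apply hx2
      have h1o : Odd x.1 := ho.of_dvd_nat (Dvd.intro _ hx.1)
      have h2o : Odd x.2 := ho.of_dvd_nat (Dvd.intro_left _ hx.1)
      have h1l : x.1 ≤ n := Nat.le_of_dvd ho.pos (Dvd.intro _ hx.1)
      have h2l : x.2 ≤ n := Nat.le_of_dvd ho.pos (Dvd.intro_left _ hx.1)
      simp only [mem_filter, mem_product, mollA, oddB, Nat.mem_divisors, mem_range]
      refine ⟨⟨⟨⟨dvd_sieveP hs h1o (h1l.trans hn), (sieveP_pos i).ne'⟩, by omega⟩, ?_, h2o⟩, hx.1⟩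
      calc x.2 < 2 ^ i := by omega
        _ ≤ (2 ^ i) ^ 42 := Nat.le_self_pow (by norm_num) _
    · rw [ArithmeticFunction.moebius_eq_zero_of_not_squarefree hs]; simp

open Finset in
lemma prod_expand (i : ℕ) (hi : 20 ≤ i) (g : ℕ → ℝ) (hg1 : g 1 = 1) (hg : ∀ a b, g (a * b) = g a * g b) :
    (∑ b ∈ oddB i, g b / b) * (∑ a ∈ mollA i, (ArithmeticFunction.moebius a : ℝ) * g a / a) - 1 =
      ∑ n ∈ suppS i, (mollC i n : ℝ) * g n / n := by
  have h1 : (∑ b ∈ oddB i, g b / b) * (∑ a ∈ mollA i, (ArithmeticFunction.moebius a : ℝ) * g a / a) =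
      ∑ x ∈ mollA i ×ˢ oddB i, (ArithmeticFunction.moebius x.1 : ℝ) * g (x.1 * x.2) / ((x.1 * x.2 : ℕ) : ℝ) := by
    rw [mul_comm, Finset.sum_mul_sum, ← Finset.sum_product']
    refine Finset.sum_congr rfl fun x _ => ?_
    rw [hg]; push_cast; rw [div_mul_div_comm]; ring
  set U := (range ((2 ^ i) ^ 43 + 1)).filter (fun n => Odd n) with hU
  have hmap : ∀ x ∈ mollA i ×ˢ oddB i, x.1 * x.2 ∈ U := by
    intro x hx
    simp only [mem_filter, mem_product, mollA, oddB, Nat.mem_divisors, mem_range] at hx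
    simp only [hU, mem_filter, mem_range]
    have h1o : Odd x.1 := (sieveP_odd i).of_dvd_nat hx.1.1.1
    refine ⟨?_, h1o.mul hx.2.2⟩
    have : x.1 * x.2 ≤ 2 ^ i * (2 ^ i) ^ 42 := Nat.mul_le_mul hx.1.2 hx.2.1.le
    rw [Nat.lt_succ_iff]
    refine this.trans (le_of_eq (by ring))
  have h2 : ∑ x ∈ mollA i ×ˢ oddB i, (ArithmeticFunction.moebius x.1 : ℝ) * g (x.1 * x.2) / ((x.1 * x.2 : ℕ) : ℝ) = ∑ n ∈ U, (mollC i n : ℝ) * g n / n := by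
    rw [← Finset.sum_fiberwise_of_maps_to hmap]
    refine Finset.sum_congr rfl fun n _ => ?_
    unfold mollC
    push_cast
    rw [Finset.sum_mul, Finset.sum_div]
    refine Finset.sum_congr rfl fun x hx => ?_
    rw [← (mem_filter.mp hx).2]
    push_cast; rfl
  have h3 : ∑ n ∈ U, (mollC i n : ℝ) * g n / n = ∑ n ∈ insert 1 (suppS i), (mollC i n : ℝ) * g n / n := by
    symm
    refine Finset.sum_subset ?_ ?_
    · intro n hn
      rw [mem_insert] at hn
      rcases hn with rfl | hn
      · simp only [hU, mem_filter, mem_range]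
        have h0 : 0 < (2 ^ i) ^ 43 := by positivity
        exact ⟨by omega, odd_one⟩
      · simp only [suppS, mem_filter] at hn
        simp only [hU, mem_filter]; exact ⟨hn.1, hn.2.1⟩
    · intro n hn hn2
      simp only [hU, mem_filter] at hn
      rw [mem_insert, not_or] at hn2
      have : n ≤ i ^ 4 := by
        by_contra hc
        exact hn2.2 (by simp only [suppS, mem_filter]; exact ⟨hn.1, hn.2, by omega⟩)
      rw [mollC_small i n hi hn.2 this, if_neg hn2.1]; simp
  have hi4 : 1 ≤ i ^ 4 := Nat.one_le_pow _ _ (by omega)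
  rw [h1, h2, h3, Finset.sum_insert (by simp only [suppS, mem_filter]; omega), mollC_small i 1 hi odd_one hi4, if_pos rfl, hg1]
  push_cast; ring

open Finset in
open Classical in
lemma bad_count : ∃ C : ℝ, 0 < C ∧ ∀ i : ℕ, 20 ≤ i → ∀ H : ℕ,
    ((((range H).filter (fun d => Odd d ∧ BadD i d)).card : ℕ) : ℝ) ≤ C * (H / i ^ 2 + ((2:ℝ) ^ i) ^ 59) := by
  obtain ⟨C, hC, hm⟩ := msq
  refine ⟨16 * (Fintype.card (ZMod 8 → SignType)) * C + 1, by positivity, fun i hi H => ?_⟩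
  set F : (ZMod 8 → SignType) → ℕ → ℝ := fun ψ d => ∑ n ∈ suppS i, ((mollC i n : ℝ) * ((ψ (n : ZMod 8) : ℤ) : ℝ) / n) * (jacobiSym (n : ℤ) d : ℝ) with hF
  have hψ : ∀ ψ : ZMod 8 → SignType, ∑ d ∈ range H with Odd d, F ψ d ^ 2 ≤ C * H / i ^ 2 + C * ((2:ℝ) ^ i) ^ 59 := by
    intro ψ
    refine hm i (by omega) (suppS i) (fun n => (mollC i n : ℝ) * ((ψ (n : ZMod 8) : ℤ) : ℝ) / n) H ?_ ?_
    · intro n hn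
      simp only [suppS, mem_filter, mem_range] at hn
      exact ⟨hn.2.1, hn.2.2, by omega⟩
    · intro n hn
      simp only [suppS, mem_filter, mem_range] at hn
      rw [abs_div, Nat.abs_cast]
      gcongr
      rw [abs_mul]
      have h1 : |((ψ (n : ZMod 8) : ℤ) : ℝ)| ≤ 1 := by
        cases ψ (n : ZMod 8) <;> simp
      exact (mul_le_of_le_one_right (abs_nonneg _) h1).trans (mollC_abs i n hn.2.1.pos.ne')
  have h1 : ((((range H).filter (fun d => Odd d ∧ BadD i d)).card : ℕ) : ℝ) ≤ ∑ d ∈ range H with Odd d, ∑ ψ : ZMod 8 → SignType, 16 * F ψ d ^ 2 := by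
    rw [← Finset.filter_filter, Finset.card_filter]
    push_cast
    refine Finset.sum_le_sum fun d _ => ?_
    split_ifs with hb
    · obtain ⟨ψ, hψ⟩ := hb
      refine le_trans ?_ (Finset.single_le_sum (f := fun ψ => 16 * F ψ d ^ 2) (fun _ _ => by positivity) (mem_univ ψ))
      have : 1 / 4 < |F ψ d| := hψ
      rw [← sq_abs]
      nlinarith
    · positivity
  refine h1.trans ?_
  rw [Finset.sum_comm]
  calc ∑ ψ : ZMod 8 → SignType, ∑ d ∈ range H with Odd d, 16 * F ψ d ^ 2 ≤ ∑ ψ : ZMod 8 → SignType, 16 * (C * H / i ^ 2 + C * ((2:ℝ) ^ i) ^ 59) := by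
        refine Finset.sum_le_sum fun ψ _ => ?_
        rw [← Finset.mul_sum]
        have := hψ ψ
        gcongr
    _ = 16 * (Fintype.card (ZMod 8 → SignType)) * C * (H / i ^ 2 + ((2:ℝ) ^ i) ^ 59) := by
        rw [Finset.sum_const, nsmul_eq_mul, Finset.card_univ]; ring
    _ ≤ _ := by gcongr; linarith


def blk (f : ℕ) : ℕ := Nat.log 2 f / 60

def BadF (f : ℕ) : Prop := ∃ a d : ℕ, a ≤ 3 ∧ Odd d ∧ f = 2 ^ a * d ∧ BadD (blk f) d

lemma blk_bounds {f : ℕ} (hf : f ≠ 0) : 2 ^ (60 * blk f) ≤ f ∧ f < 2 ^ (60 * (blk f + 1)) := by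
  unfold blk
  constructor
  · exact (Nat.pow_le_pow_right (by norm_num) (by omega)).trans (Nat.pow_log_le_self 2 hf)
  · exact (Nat.lt_pow_succ_log_self (b := 2) (by norm_num) f).trans_le (Nat.pow_le_pow_right (by norm_num) (by omega))

open Finset in
open Classical in
lemma bad_block : ∃ C : ℝ, 0 < C ∧ ∀ i : ℕ, 20 ≤ i → ∀ S : Finset ℕ, (∀ f ∈ S, f ≠ 0 ∧ blk f = i ∧ BadF f) →
    ∑ f ∈ S, (1:ℝ) / f ≤ C * ((i:ℝ) ^ 2)⁻¹ := by
  obtain ⟨C, hC, hb⟩ := bad_count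
  refine ⟨4 * C * (2 ^ 60 + 1), by positivity, fun i hi S hS => ?_⟩
  obtain ⟨H, hH⟩ : ∃ H : ℕ, H = 2 ^ (60 * (i + 1)) := ⟨_, rfl⟩
  set T := (range H).filter (fun d => Odd d ∧ BadD i d) with hT
  have hsub : S ⊆ (range 4 ×ˢ T).image (fun x => 2 ^ x.1 * x.2) := by
    intro f hf
    obtain ⟨h0, hi', a, d, ha, hd, hfd, hbd⟩ := hS f hf
    rw [mem_image]
    refine ⟨(a, d), ?_, hfd.symm⟩
    have h1 : d ≤ f := by rw [hfd]; exact Nat.le_mul_of_pos_left _ (by positivity)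
    have h2 := (blk_bounds h0).2
    rw [hi'] at h2 hbd
    simp only [mem_product, mem_range, hT, mem_filter]
    rw [← hH] at h2
    exact ⟨by omega, by omega, hd, hbd⟩
  have hcard : (S.card : ℝ) ≤ 4 * (C * (H / i ^ 2 + ((2:ℝ) ^ i) ^ 59)) := by
    have h1 : S.card ≤ 4 * T.card := by
      refine (card_le_card hsub).trans (card_image_le.trans ?_)
      rw [card_product, card_range]
    have h2 := hb i hi H
    calc (S.card : ℝ) ≤ 4 * (T.card : ℝ) := by exact_mod_cast h1
      _ ≤ _ := by gcongr
  have hterm : ∀ f ∈ S, (1:ℝ) / f ≤ 1 / ((2:ℝ) ^ i) ^ 60 := by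
    intro f hf
    obtain ⟨h0, hi', -⟩ := hS f hf
    have h2 := (blk_bounds h0).1
    rw [hi'] at h2
    have : ((2:ℝ) ^ i) ^ 60 ≤ f := by
      rw [← pow_mul, mul_comm]; exact_mod_cast h2
    gcongr
  have h3 := Finset.sum_le_card_nsmul S _ _ hterm
  rw [nsmul_eq_mul] at h3
  refine h3.trans ?_
  have hi2 : (i:ℝ) ^ 2 ≤ 2 ^ i := by
    have h4 := pow4_lt_two_pow i hi
    have : i ^ 2 ≤ 2 ^ i := (Nat.pow_le_pow_right (by omega) (by norm_num)).trans h4.le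
    exact_mod_cast this
  have hHr : (H : ℝ) = 2 ^ 60 * ((2:ℝ) ^ i) ^ 60 := by
    rw [hH, Nat.cast_pow, Nat.cast_ofNat, mul_add, mul_one, pow_add, pow_mul', mul_comm]
  set T' : ℝ := (2:ℝ) ^ i with hT'
  have hTp : 0 < T' := by positivity
  have hip : (0:ℝ) < i := by exact_mod_cast (by omega : 0 < i)
  calc (S.card : ℝ) * (1 / T' ^ 60) ≤ 4 * (C * (H / i ^ 2 + T' ^ 59)) * (1 / T' ^ 60) := by gcongr
    _ = 4 * C * (2 ^ 60 * ((i:ℝ) ^ 2)⁻¹ + T'⁻¹) := by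
        rw [hHr]; field_simp
    _ ≤ 4 * C * (2 ^ 60 * ((i:ℝ) ^ 2)⁻¹ + ((i:ℝ) ^ 2)⁻¹) := by gcongr
    _ = _ := by ring

open Finset in
open Classical in
lemma bad_tail (η : ℝ) (hη : 0 < η) (i0 : ℕ) : ∃ i1 : ℕ, i0 ≤ i1 ∧ 20 ≤ i1 ∧ ∀ Y : ℕ,
    ∑ f ∈ (range Y).filter (fun f => f ≠ 0 ∧ i1 ≤ blk f ∧ BadF f), (1:ℝ) / f ≤ η := by
  obtain ⟨C, hC, hb⟩ := bad_block
  obtain ⟨n, hn⟩ := exists_nat_gt (2 * C / η)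
  refine ⟨max (max i0 20) (n + 1), by simp, by simp, fun Y => ?_⟩
  set i1 := max (max i0 20) (n + 1) with hi1
  have h20 : 20 ≤ i1 := by simp [hi1]
  have hn1 : n + 1 ≤ i1 := by simp [hi1]
  have hmap : ∀ f ∈ (range Y).filter (fun f => f ≠ 0 ∧ i1 ≤ blk f ∧ BadF f), blk f ∈ Ioo (i1 - 1) (Y + 1) := by
    intro f hf
    simp only [mem_filter, mem_range] at hf
    rw [mem_Ioo]
    have : blk f ≤ f := (Nat.div_le_self _ _).trans (Nat.log_le_self 2 f)
    omega
  rw [← Finset.sum_fiberwise_of_maps_to hmap]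
  have h1 : ∀ i ∈ Ioo (i1 - 1) (Y + 1), ∑ f ∈ ((range Y).filter (fun f => f ≠ 0 ∧ i1 ≤ blk f ∧ BadF f)) with blk f = i, (1:ℝ) / f ≤ C * ((i:ℝ) ^ 2)⁻¹ := by
    intro i hi
    rw [mem_Ioo] at hi
    refine hb i (by omega) _ fun f hf => ?_
    simp only [mem_filter] at hf
    exact ⟨hf.1.2.1, hf.2, hf.1.2.2.2⟩
  refine (Finset.sum_le_sum h1).trans ?_
  rw [← Finset.mul_sum]
  have h2 := sum_Ioo_inv_sq_le (α := ℝ) (i1 - 1) (Y + 1)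
  have hn2 : (n:ℝ) ≤ ((i1 - 1 : ℕ) : ℝ) := by exact_mod_cast (by omega : n ≤ i1 - 1)
  have hnp : 0 < (n:ℝ) := lt_of_le_of_lt (by positivity) hn
  calc C * ∑ i ∈ Ioo (i1 - 1) (Y + 1), ((i:ℝ) ^ 2)⁻¹ ≤ C * (2 / (((i1 - 1 : ℕ) : ℝ) + 1)) := by gcongr
    _ ≤ C * (2 / n) := by gcongr; linarith
    _ ≤ η := by
        rw [div_lt_iff₀ hη] at hn
        rw [mul_div_assoc', div_le_iff₀ hnp]; linarith


open Finset in
lemma prime_dyadic (k : ℕ) (hk : 1 ≤ k) :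
    ∑ p ∈ (Ioc (2 ^ k) (2 ^ (k + 1))).filter Nat.Prime, (1:ℝ) / p ≤ 4 / k := by
  set S := (Ioc (2 ^ k) (2 ^ (k + 1))).filter Nat.Prime with hS
  have hθ := Chebyshev.theta_le_log4_mul_x (x := (2:ℝ) ^ (k + 1)) (by positivity)
  have hfl : ⌊(2:ℝ) ^ (k + 1)⌋₊ = 2 ^ (k + 1) := by
    have : ((2:ℝ) ^ (k + 1)) = ((2 ^ (k + 1) : ℕ) : ℝ) := by push_cast; rfl
    rw [this, Nat.floor_natCast]
  have hsum : (S.card : ℝ) * (k * Real.log 2) ≤ Chebyshev.theta ((2:ℝ) ^ (k + 1)) := by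
    unfold Chebyshev.theta
    rw [hfl, ← nsmul_eq_mul]
    refine (Finset.card_nsmul_le_sum S (fun p => Real.log p) _ ?_).trans ?_
    · intro p hp
      simp only [hS, mem_filter, mem_Ioc] at hp
      rw [← Real.log_pow]
      refine Real.log_le_log (by positivity) ?_
      exact_mod_cast hp.1.1.le
    · refine Finset.sum_le_sum_of_subset_of_nonneg ?_ ?_
      · intro p hp
        simp only [hS, mem_filter, mem_Ioc] at hp ⊢
        exact ⟨⟨hp.2.pos, hp.1.2⟩, hp.2⟩
      · intro p _ _
        exact Real.log_natCast_nonneg p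
  have hl4 : Real.log 4 = 2 * Real.log 2 := by
    rw [show (4:ℝ) = 2 ^ 2 by norm_num, Real.log_pow]; norm_num
  have hl2 : 0 < Real.log 2 := Real.log_pos (by norm_num)
  have hkp : (0:ℝ) < k := by exact_mod_cast hk
  have hcard : (S.card : ℝ) * k ≤ 4 * 2 ^ k := by
    have h1 : (S.card : ℝ) * k * Real.log 2 ≤ (4 * 2 ^ k) * Real.log 2 := by
      calc (S.card : ℝ) * k * Real.log 2 = (S.card : ℝ) * (k * Real.log 2) := by ring
        _ ≤ _ := hsum.trans hθ
        _ = _ := by rw [hl4, pow_succ]; ring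
    exact le_of_mul_le_mul_right h1 hl2
  have hterm : ∀ p ∈ S, (1:ℝ) / p ≤ 1 / 2 ^ k := by
    intro p hp
    simp only [hS, mem_filter, mem_Ioc] at hp
    have : (2:ℝ) ^ k ≤ p := by exact_mod_cast hp.1.1.le
    gcongr
  have h3 := Finset.sum_le_card_nsmul S _ _ hterm
  rw [nsmul_eq_mul] at h3
  refine h3.trans ?_
  rw [mul_one_div, div_le_div_iff₀ (by positivity) hkp]
  exact hcard

open Finset in
lemma mertens (m : ℕ) (hm : 1 ≤ m) :
    ∑ p ∈ (range (2 ^ m + 1)).filter Nat.Prime, (1:ℝ) / p ≤ 5 + 4 * Real.log m := by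
  have h : ∀ m : ℕ, ∑ p ∈ (range (2 ^ (m + 1) + 1)).filter Nat.Prime, (1:ℝ) / p ≤ 1 / 2 + 4 * (harmonic m : ℝ) := by
    intro m
    induction m with
    | zero =>
      have : (range (2 ^ (0 + 1) + 1)).filter Nat.Prime = {2} := by decide
      rw [this]; simp
    | succ m ih =>
      have : (range (2 ^ (m + 1 + 1) + 1)).filter Nat.Prime = (range (2 ^ (m + 1) + 1)).filter Nat.Prime ∪ (Ioc (2 ^ (m + 1)) (2 ^ (m + 1 + 1))).filter Nat.Prime := by
        rw [← filter_union]
        congr 1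
        ext x
        simp only [mem_union, mem_range, mem_Ioc]
        have : 2 ^ (m + 1) ≤ 2 ^ (m + 1 + 1) := Nat.pow_le_pow_right (by norm_num) (by omega)
        omega
      rw [this]
      rw [Finset.sum_union]
      · have h1 := prime_dyadic (m + 1) (by omega)
        rw [harmonic_succ]
        push_cast at h1 ⊢
        rw [div_eq_mul_inv] at h1
        linarith
      · rw [Finset.disjoint_left]
        intro x hx hx2
        simp only [mem_filter, mem_range, mem_Ioc] at hx hx2
        omega
  obtain ⟨n, rfl⟩ : ∃ n, m = n + 1 := ⟨m - 1, by omega⟩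
  refine (h n).trans ?_
  have h1 := harmonic_le_one_add_log n
  have h2 : Real.log n ≤ Real.log ((n + 1 : ℕ) : ℝ) := by
    rcases Nat.eq_zero_or_pos n with rfl | hn
    · simp
    · exact Real.log_le_log (by exact_mod_cast hn) (by push_cast; linarith)
  linarith

/-- triple-log scale -/
def tlg (D : ℕ) : ℕ := Nat.log 2 (Nat.log 2 D) + 1

lemma log_lt_tlg (D : ℕ) : Nat.log 2 D < 2 ^ tlg D := Nat.lt_pow_succ_log_self (b := 2) (by norm_num) _

open Finset in
lemma primeFactors_sum (D : ℕ) (hD : D ≠ 0) :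
    ∑ p ∈ D.primeFactors, (1:ℝ) / p ≤ 6 + 4 * Real.log (tlg D) := by
  set m := tlg D with hm
  have hm1 : 1 ≤ m := by simp [hm, tlg]
  rw [← Finset.sum_filter_add_sum_filter_not D.primeFactors (fun p => p ≤ 2 ^ m)]
  have h1 : ∑ p ∈ D.primeFactors with p ≤ 2 ^ m, (1:ℝ) / p ≤ 5 + 4 * Real.log m := by
    refine le_trans ?_ (mertens m hm1)
    refine Finset.sum_le_sum_of_subset_of_nonneg ?_ (fun _ _ _ => by positivity)
    intro p hp
    simp only [mem_filter, mem_range] at hp ⊢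
    exact ⟨by omega, Nat.prime_of_mem_primeFactors hp.1⟩
  have h2 : ∑ p ∈ D.primeFactors with ¬ p ≤ 2 ^ m, (1:ℝ) / p ≤ 1 := by
    have hterm : ∀ p ∈ D.primeFactors.filter (fun p => ¬ p ≤ 2 ^ m), (1:ℝ) / p ≤ 1 / 2 ^ m := by
      intro p hp
      simp only [mem_filter, not_le] at hp
      have : (2:ℝ) ^ m ≤ p := by exact_mod_cast hp.2.le
      gcongr
    have h3 := Finset.sum_le_card_nsmul _ _ _ hterm
    rw [nsmul_eq_mul] at h3
    refine h3.trans ?_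
    rw [mul_one_div, div_le_one (by positivity)]
    have h4 : (D.primeFactors.filter (fun p => ¬ p ≤ 2 ^ m)).card ≤ Nat.log 2 D := by
      refine (card_filter_le _ _).trans ?_
      refine Nat.le_log_of_pow_le (by norm_num) ?_
      refine (Finset.pow_card_le_prod _ (fun p => p) 2 fun p hp => (Nat.prime_of_mem_primeFactors hp).two_le).trans ?_
      exact Nat.le_of_dvd (Nat.pos_of_ne_zero hD) (Nat.prod_primeFactors_dvd D)
    have h5 := log_lt_tlg D
    exact_mod_cast (h4.trans h5.le)
  linarith


open Finset in
lemma sieveP_sqf (i : ℕ) : Squarefree (sieveP i) := by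
  unfold sieveP
  refine Finset.squarefree_prod_of_pairwise_isCoprime (fun p hp q hq hpq => ?_) fun p hp => ?_
  · simp only [← Nat.coprime_iff_isRelPrime]
    exact (Nat.coprime_primes (mem_filter.mp hp).2.1 (mem_filter.mp hq).2.1).mpr hpq
  · exact (mem_filter.mp hp).2.1.squarefree

open Finset in
lemma sieveP_pf (i : ℕ) : (sieveP i).primeFactors = oddPr i :=
  Nat.primeFactors_prod fun _ hp => (mem_filter.mp hp).2.1

def afOf (g : ℕ → ℝ) : ArithmeticFunction ℝ := ⟨fun n => g n / n, by simp⟩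

lemma afOf_mult (g : ℕ → ℝ) (hg1 : g 1 = 1) (hg : ∀ a b, g (a * b) = g a * g b) : (afOf g).IsMultiplicative := by
  refine ⟨?_, fun {m n} _ => ?_⟩
  · change g 1 / (1:ℕ) = 1
    rw [hg1]; simp
  · change g (m * n) / ((m * n : ℕ):ℝ) = g m / m * (g n / n)
    rw [hg]; push_cast; rw [div_mul_div_comm]

open Finset in
lemma moll_prod (i : ℕ) (g : ℕ → ℝ) (hg1 : g 1 = 1) (hg : ∀ a b, g (a * b) = g a * g b) :
    ∑ a ∈ (sieveP i).divisors, (ArithmeticFunction.moebius a : ℝ) * g a / a = ∏ p ∈ oddPr i, (1 - g p / p) := by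
  have := (ArithmeticFunction.IsMultiplicative.prodPrimeFactors_one_sub_of_squarefree _ (afOf_mult g hg1 hg) (sieveP_sqf i))
  rw [sieveP_pf] at this
  change ∏ p ∈ oddPr i, (1 - g p / p) = _ at this
  rw [this]
  refine Finset.sum_congr rfl fun a _ => ?_
  rw [mul_div_assoc]; rfl

open Finset in
lemma oddPr_sum (i : ℕ) (hi : 1 ≤ i) : ∑ p ∈ oddPr i, (1:ℝ) / p ≤ 1 + 4 * Real.log i := by
  have h1 := harmonic_le_one_add_log (i ^ 4)
  rw [harmonic_eq_sum_Icc] at h1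
  push_cast at h1
  rw [Real.log_pow] at h1
  refine le_trans ?_ (h1.trans (by norm_num))
  simp only [one_div]
  refine Finset.sum_le_sum_of_subset_of_nonneg ?_ (fun _ _ _ => by positivity)
  intro p hp
  simp only [oddPr, mem_filter, mem_range] at hp
  rw [mem_Icc]
  exact ⟨hp.2.1.pos, by omega⟩

open Finset in
lemma prod_le_exp (i : ℕ) (u : ℕ → ℝ) (c : ℝ) (hu : ∀ p ∈ oddPr i, |u p| ≤ c * (1 / p)) :
    |∏ p ∈ oddPr i, (1 + u p)| ≤ Real.exp (c * ∑ p ∈ oddPr i, (1:ℝ) / p) := by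
  rw [Finset.abs_prod, Finset.mul_sum, Real.exp_sum]
  refine Finset.prod_le_prod (fun _ _ => abs_nonneg _) fun p hp => ?_
  calc |1 + u p| ≤ |1| + |u p| := abs_add_le _ _
    _ ≤ c * (1 / p) + 1 := by rw [abs_one]; linarith [hu p hp]
    _ ≤ _ := Real.add_one_le_exp _

open Finset in
lemma rankin (i : ℕ) (hi : 1 ≤ i) : ∑ a ∈ (sieveP i).divisors.filter (fun a => ¬ a ≤ 2 ^ i), (1:ℝ) / a ≤
    Real.exp (Real.sqrt i * (1 + 4 * Real.log i) - i * Real.log 2 / 8) := by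
  set h : ℕ → ℝ := fun n => (n:ℝ) ^ (1/8 : ℝ) with hh
  have hm1 : h 1 = 1 := by simp [hh]
  have hmm : ∀ a b, h (a * b) = h a * h b := by
    intro a b; simp only [hh]; push_cast
    rw [Real.mul_rpow (by positivity) (by positivity)]
  have hiR : (1:ℝ) ≤ i := by exact_mod_cast hi
  have hprod := (afOf_mult h hm1 hmm).prodPrimeFactors_one_add_of_squarefree (sieveP_sqf i)
  rw [sieveP_pf] at hprod
  change ∏ p ∈ oddPr i, (1 + h p / p) = ∑ a ∈ (sieveP i).divisors, h a / a at hprod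
  have hE : Real.exp (i * Real.log 2 / 8) = ((2:ℝ) ^ i) ^ (1/8:ℝ) := by
    rw [Real.rpow_def_of_pos (by positivity), Real.log_pow]; congr 1; ring
  have h1 : ∑ a ∈ (sieveP i).divisors.filter (fun a => ¬ a ≤ 2 ^ i), (1:ℝ) / a ≤ Real.exp (-(i * Real.log 2 / 8)) * ∑ a ∈ (sieveP i).divisors, h a / a := by
    rw [Finset.mul_sum]
    refine le_trans (Finset.sum_le_sum (g := fun a => Real.exp (-(i * Real.log 2 / 8)) * (h a / a)) ?_) ?_
    · intro a ha
      simp only [mem_filter, not_le] at ha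
      rw [Real.exp_neg, hE, mul_div_assoc', ]
      have ha0 : (0:ℝ) < a := by exact_mod_cast (lt_of_le_of_lt (Nat.zero_le _) ha.2)
      gcongr
      rw [inv_mul_eq_div, le_div_iff₀ (by positivity), one_mul]
      refine Real.rpow_le_rpow (by positivity) ?_ (by norm_num)
      exact_mod_cast ha.2.le
    · refine Finset.sum_le_sum_of_subset_of_nonneg (filter_subset _ _) (fun _ _ _ => by positivity)
  refine h1.trans ?_
  have h2 : ∑ a ∈ (sieveP i).divisors, h a / a ≤ Real.exp (Real.sqrt i * (1 + 4 * Real.log i)) := by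
    rw [← hprod]
    refine (le_abs_self _).trans ((prod_le_exp i (fun p => h p / p) (Real.sqrt i) ?_).trans ?_)
    · intro p hp
      simp only [oddPr, mem_filter, mem_range] at hp
      rw [abs_of_nonneg (by positivity), mul_one_div]
      gcongr
      simp only [hh]
      have hp4 : (p:ℝ) ≤ (i:ℝ) ^ 4 := by exact_mod_cast (by omega : p ≤ i ^ 4)
      refine (Real.rpow_le_rpow (by positivity) hp4 (by norm_num)).trans ?_
      rw [← Real.rpow_natCast, ← Real.rpow_mul (by positivity), Real.sqrt_eq_rpow]
      norm_num
    · rw [Real.exp_le_exp]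
      gcongr
      exact oddPr_sum i hi
  calc Real.exp (-(i * Real.log 2 / 8)) * ∑ a ∈ (sieveP i).divisors, h a / a
      ≤ Real.exp (-(i * Real.log 2 / 8)) * Real.exp (Real.sqrt i * (1 + 4 * Real.log i)) := by gcongr
    _ = _ := by rw [← Real.exp_add]; congr 1; ring

open Finset in
lemma moll_tail : ∃ i0 : ℕ, 1 ≤ i0 ∧ ∀ i : ℕ, i0 ≤ i → (i:ℝ) * ∑ a ∈ (sieveP i).divisors.filter (fun a => ¬ a ≤ 2 ^ i), (1:ℝ) / a ≤ 1 / 1000 := by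
  refine ⟨1000 ^ 4, by norm_num, fun i hi => ?_⟩
  have hi1 : 1 ≤ i := le_trans (by norm_num) hi
  have hiR : ((1000:ℝ)) ^ 4 ≤ i := by exact_mod_cast hi
  set t := Real.sqrt (Real.sqrt i) with ht
  have ht2 : t ^ 2 = Real.sqrt i := Real.sq_sqrt (Real.sqrt_nonneg _)
  have ht4 : t ^ 4 = i := by
    rw [show t ^ 4 = (t ^ 2) ^ 2 by ring, ht2, Real.sq_sqrt (by positivity)]
  have ht0 : 0 ≤ t := Real.sqrt_nonneg _
  have ht1 : 1000 ≤ t := by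
    rw [← ht4] at hiR
    exact le_of_pow_le_pow_left₀ (by norm_num) ht0 hiR
  have hlog : Real.log i ≤ 4 * t := by
    rw [← ht4, Real.log_pow]
    have := Real.log_le_self ht0
    push_cast; linarith
  have hr := rankin i hi1
  have hip : (0:ℝ) < i := by rw [← ht4]; positivity
  calc (i:ℝ) * ∑ a ∈ (sieveP i).divisors.filter (fun a => ¬ a ≤ 2 ^ i), (1:ℝ) / a
      ≤ Real.exp (Real.log i) * Real.exp (Real.sqrt i * (1 + 4 * Real.log i) - i * Real.log 2 / 8) := by
        rw [Real.exp_log hip]; gcongr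
    _ = Real.exp (Real.log i + (Real.sqrt i * (1 + 4 * Real.log i) - i * Real.log 2 / 8)) := by rw [Real.exp_add]
    _ ≤ Real.exp (-1000) := by
        rw [Real.exp_le_exp, ← ht2]
        have hl2 := Real.log_two_gt_d9
        have h1 : t ^ 2 * (1 + 4 * Real.log i) ≤ t ^ 2 * (1 + 16 * t) :=
          mul_le_mul_of_nonneg_left (by linarith) (by positivity)
        have h2 : (i:ℝ) * Real.log 2 / 8 ≥ t ^ 4 * 0.08 := by rw [ht4]; nlinarith
        have h3 : t ^ 3 * 1000 ≤ t ^ 4 := by rw [pow_succ t 3]; gcongr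
        have h4 : t ^ 2 * 1000 ≤ t ^ 3 := by rw [pow_succ t 2]; gcongr
        have h5 : t * 1000 ≤ t ^ 2 := by nlinarith
        nlinarith
    _ ≤ 1 / 1000 := by
        rw [Real.exp_neg, one_div]
        gcongr
        linarith [Real.add_one_le_exp (1000:ℝ)]


lemma log_one_sub_bound (u : ℝ) (hu : |u| ≤ 1 / 2) : |Real.log (1 - u)| ≤ 2 * |u| := by
  have h := abs_le.mp hu
  have hp : 0 < 1 - u := by linarith
  rw [abs_le]
  constructor
  · have h1 := Real.one_sub_inv_le_log_of_pos hp
    refine le_trans ?_ h1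
    have h2 : (1 - u)⁻¹ - 1 = u * (1 - u)⁻¹ := by field_simp; ring
    have h3 : (1 - u)⁻¹ ≤ 2 := by
      rw [inv_le_comm₀ hp (by norm_num)]; linarith
    have h4 : u * (1 - u)⁻¹ ≤ |u| * 2 := by
      calc u * (1 - u)⁻¹ ≤ |u| * (1 - u)⁻¹ := by gcongr; exact le_abs_self u
        _ ≤ _ := by gcongr
    linarith
  · have h1 := Real.log_le_sub_one_of_pos hp
    have := neg_abs_le u
    have := abs_nonneg u
    linarith

open Finset in
lemma odd_split (F : ℕ → ℝ) (M : ℕ) :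
    ∑ n ∈ (range (2 * M)).filter (fun n => Odd n), F n = ∑ n ∈ range (2 * M), F n - ∑ m ∈ range M, F (2 * m) := by
  rw [Finset.sum_filter]
  induction M with
  | zero => simp
  | succ M ih =>
    rw [show 2 * (M + 1) = 2 * M + 1 + 1 by ring, sum_range_succ, sum_range_succ, sum_range_succ _ (2 * M + 1), sum_range_succ _ (2 * M), sum_range_succ _ M, ih]
    have h1 : ¬ Odd (2 * M) := by simp
    have h2 : Odd (2 * M + 1) := ⟨M, rfl⟩
    rw [if_neg h1, if_pos h2]; ring

lemma quad_re {f : ℕ} (χ : DirichletCharacter ℂ f) (hq : χ ^ 2 = 1) (x : ZMod f) :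
    χ x = ((χ x).re : ℂ) := by
  rcases quad_vals χ hq x with h | h | h <;> rw [h] <;> simp

lemma quad_re_abs {f : ℕ} (χ : DirichletCharacter ℂ f) (hq : χ ^ 2 = 1) (x : ZMod f) :
    |(χ x).re| ≤ 1 := by
  rcases quad_vals χ hq x with h | h | h <;> rw [h] <;> simp

lemma quad_re_mul {f : ℕ} (χ : DirichletCharacter ℂ f) (hq : χ ^ 2 = 1) (x y : ZMod f) :
    (χ (x * y)).re = (χ x).re * (χ y).re := by
  have h := map_mul χ x y
  rw [quad_re χ hq x, quad_re χ hq y, ← Complex.ofReal_mul] at h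
  rw [h, Complex.ofReal_re]

open Finset in
lemma real_tail {f : ℕ} [NeZero f] (χ : DirichletCharacter ℂ f) (hp : χ.IsPrimitive)
    (hq : χ ^ 2 = 1) (h1 : χ ≠ 1) (N : ℕ) (hN : 0 < N) :
    |(χ.LFunction 1).re - ∑ n ∈ range N, (χ (n : ZMod f)).re / n| ≤ 2 * ((2 + 2 ^ 60) * ((2:ℝ) ^ blk f) ^ 40) / N := by
  obtain ⟨i, hi⟩ : ∃ i, i = blk f := ⟨_, rfl⟩
  rw [← hi]
  obtain ⟨K, hK⟩ : ∃ K : ℝ, K = 2 ^ 60 := ⟨_, rfl⟩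
  rw [← hK]
  have hf := (blk_bounds (NeZero.ne f)).2
  rw [← hi] at hf
  have hfR : (f:ℝ) ≤ K * ((2:ℝ) ^ i) ^ 60 := by
    have : (f:ℝ) ≤ ((2 ^ (60 * (i + 1)) : ℕ) : ℝ) := by exact_mod_cast hf.le
    rw [Nat.cast_pow, Nat.cast_ofNat, mul_add, mul_one, pow_add, pow_mul', mul_comm, ← hK] at this
    exact this
  obtain ⟨T, hT⟩ : ∃ T : ℕ, T = 2 ^ i := ⟨_, rfl⟩
  have hTR : (2:ℝ) ^ i = T := by rw [hT]; push_cast; rfl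
  have hTp : 0 < T := by rw [hT]; positivity
  have hTpR : (0:ℝ) < T := by exact_mod_cast hTp
  rw [hTR] at hfR ⊢
  clear hf hTR hT hK
  have hB : ∀ L, ‖∑ t ∈ range L, χ (t : ZMod f)‖ ≤ (2 + K) * (T:ℝ) ^ 40 := by
    intro L
    obtain ⟨w, hw⟩ : ∃ w : ℕ, w = T ^ 40 := ⟨_, rfl⟩
    have hwR : (w:ℝ) = (T:ℝ) ^ 40 := by rw [hw, Nat.cast_pow]
    have hwp : 0 < w := by rw [hw]; exact Nat.pow_pos hTp
    have h := pv χ hp hq h1 0 L w hwp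
    simp only [add_zero] at h
    refine h.trans ?_
    have hs : √(w : ℝ) = (T:ℝ) ^ 20 := by
      rw [hwR, show (T:ℝ) ^ 40 = (T ^ 20) ^ 2 by ring]
      exact Real.sqrt_sq (by positivity)
    rw [hs]
    have : (f:ℝ) / (T:ℝ) ^ 20 ≤ K * (T:ℝ) ^ 40 := by
      rw [div_le_iff₀ (by positivity)]
      refine hfR.trans (le_of_eq (by ring))
    rw [hwR]; linarith
  have ht := tail_bound χ h1 _ hB N hN
  refine le_trans ?_ ht
  have : (χ.LFunction 1).re - ∑ n ∈ range N, (χ (n : ZMod f)).re / n = (χ.LFunction 1 - ∑ n ∈ range N, χ (n : ZMod f) / n).re := by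
    rw [Complex.sub_re, Complex.re_sum]
    congr 1
    refine Finset.sum_congr rfl fun n _ => ?_
    rw [Complex.div_natCast_re]
  rw [this]
  exact Complex.abs_re_le_norm _

open Finset in
lemma odd_tail {f : ℕ} [NeZero f] (χ : DirichletCharacter ℂ f) (hp : χ.IsPrimitive)
    (hq : χ ^ 2 = 1) (h1 : χ ≠ 1) (hi1 : 1 ≤ blk f) :
    |(χ.LFunction 1).re * (1 - (χ (2 : ZMod f)).re / 2) - ∑ b ∈ oddB (blk f), (χ (b : ZMod f)).re / b| ≤
      4 * (2 + 2 ^ 60) / ((2:ℝ) ^ blk f) ^ 2 := by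
  have hmain := real_tail χ hp hq h1
  obtain ⟨i, hi⟩ : ∃ i, i = blk f := ⟨_, rfl⟩
  rw [← hi] at hmain hi1 ⊢
  obtain ⟨K, hK⟩ : ∃ K : ℝ, K = 2 + 2 ^ 60 := ⟨_, rfl⟩
  rw [← hK] at hmain ⊢
  obtain ⟨M, hM⟩ : ∃ M, (2 ^ i) ^ 42 = 2 * M := by
    obtain ⟨j, rfl⟩ : ∃ j, i = j + 1 := ⟨i - 1, by omega⟩
    exact ⟨2 ^ j * (2 ^ (j + 1)) ^ 41, by rw [pow_succ (2 ^ (j + 1)) 41, pow_succ 2 j]; ring⟩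
  have hMp : 0 < M := by
    have : 0 < (2 ^ i) ^ 42 := by positivity
    omega
  have hA := hmain (2 * M) (by omega)
  have hB := hmain M hMp
  have hMR : ((2:ℝ) ^ i) ^ 42 = 2 * M := by exact_mod_cast hM
  have hMpR : (0:ℝ) < M := by exact_mod_cast hMp
  unfold oddB
  rw [hM, odd_split (fun b => (χ (b : ZMod f)).re / b)]
  have h2 : ∑ m ∈ range M, (χ ((2 * m : ℕ) : ZMod f)).re / ((2 * m : ℕ) : ℝ) = (χ (2 : ZMod f)).re / 2 * ∑ m ∈ range M, (χ (m : ZMod f)).re / m := by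
    rw [Finset.mul_sum]
    refine Finset.sum_congr rfl fun m _ => ?_
    push_cast
    rw [quad_re_mul χ hq, div_mul_div_comm]
  rw [h2]
  set ℓ := (χ.LFunction 1).re
  set g2 := (χ (2 : ZMod f)).re with hg2
  have hg2a : |g2| ≤ 1 := quad_re_abs χ hq _
  set A := ∑ n ∈ range (2 * M), (χ (n : ZMod f)).re / n
  set B := ∑ n ∈ range M, (χ (n : ZMod f)).re / n
  set T : ℝ := (2:ℝ) ^ i with hT
  have hTp : 0 < T := by positivity
  have e : ℓ * (1 - g2 / 2) - (A - g2 / 2 * B) = (ℓ - A) - g2 / 2 * (ℓ - B) := by ring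
  rw [e]
  have h3 : |g2 / 2 * (ℓ - B)| ≤ 1 / 2 * (2 * (K * T ^ 40) / M) := by
    rw [abs_mul, abs_div, abs_two]; gcongr
  have h4 : 2 * (K * T ^ 40) / ((2 * M : ℕ) : ℝ) = 2 * K / T ^ 2 := by
    push_cast; rw [← hMR]; field_simp
  have h5 : 1 / 2 * (2 * (K * T ^ 40) / (M : ℝ)) = 2 * K / T ^ 2 := by
    rw [← h4]; push_cast; field_simp
  calc |(ℓ - A) - g2 / 2 * (ℓ - B)| ≤ |ℓ - A| + |g2 / 2 * (ℓ - B)| := abs_sub _ _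
    _ ≤ 2 * K / T ^ 2 + 2 * K / T ^ 2 := by rw [h4] at hA; rw [h5] at h3; exact add_le_add hA h3
    _ = _ := by ring

lemma real_combine (ℓ S M MR : ℝ) (h1 : |S * MR - 1| ≤ 1 / 4) (h2 : |ℓ - S| * |M| ≤ 1 / 16)
    (h3 : |S| * |M - MR| ≤ 1 / 16) : |ℓ * M - 1| ≤ 1 / 2 := by
  rw [← abs_mul] at h2 h3
  have e : ℓ * M - 1 = (S * MR - 1) + (ℓ - S) * M + S * (M - MR) := by ring
  rw [e]
  rw [abs_le] at *
  constructor <;> linarith [h1.1, h1.2, h2.1, h2.2, h3.1, h3.2]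

lemma log_half (x : ℝ) (h : |x - 1| ≤ 1 / 2) : |Real.log x| ≤ 1 := by
  have := log_one_sub_bound (1 - x) (by rwa [abs_sub_comm])
  rw [sub_sub_cancel] at this
  rw [abs_sub_comm] at h
  linarith


open Finset in
lemma S_bound (i : ℕ) (hi : 20 ≤ i) (g : ℕ → ℝ) (hg : ∀ n, |g n| ≤ 1) : |∑ b ∈ oddB i, g b / b| ≤ 31 * i := by
  have h1 : |∑ b ∈ oddB i, g b / b| ≤ ∑ b ∈ oddB i, ((b:ℝ))⁻¹ := by
    refine (Finset.abs_sum_le_sum_abs _ _).trans (Finset.sum_le_sum fun b _ => ?_)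
    rw [abs_div, Nat.abs_cast, div_eq_mul_inv]
    exact mul_le_of_le_one_left (by positivity) (hg b)
  obtain ⟨N, hN⟩ : ∃ N : ℕ, N = (2 ^ i) ^ 42 := ⟨_, rfl⟩
  have h2 := harmonic_le_one_add_log N
  rw [harmonic_eq_sum_Icc] at h2
  push_cast at h2
  have h3 : Real.log N = 42 * (i * Real.log 2) := by
    rw [hN, Nat.cast_pow, Nat.cast_pow, Real.log_pow, Real.log_pow]; norm_num
  have hl := Real.log_two_lt_d9
  have hiR : (20:ℝ) ≤ i := by exact_mod_cast hi
  refine h1.trans (le_trans ?_ (h2.trans (by rw [h3]; nlinarith)))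
  refine Finset.sum_le_sum_of_subset_of_nonneg ?_ (fun _ _ _ => by positivity)
  intro b hb
  simp only [oddB, ← hN, mem_filter, mem_range] at hb
  rw [mem_Icc]
  have := hb.2.pos
  omega

open Finset in
lemma M_diff (i : ℕ) (g : ℕ → ℝ) (hg : ∀ n, |g n| ≤ 1) :
    |∑ a ∈ (sieveP i).divisors, (ArithmeticFunction.moebius a : ℝ) * g a / a -
      ∑ a ∈ mollA i, (ArithmeticFunction.moebius a : ℝ) * g a / a| ≤
    ∑ a ∈ (sieveP i).divisors.filter (fun a => ¬ a ≤ 2 ^ i), (1:ℝ) / a := by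
  rw [← Finset.sum_filter_add_sum_filter_not (sieveP i).divisors (fun a => a ≤ 2 ^ i) (fun a => (ArithmeticFunction.moebius a : ℝ) * g a / a)]
  unfold mollA
  rw [add_sub_cancel_left]
  refine (Finset.abs_sum_le_sum_abs _ _).trans (Finset.sum_le_sum fun a _ => ?_)
  rw [abs_div, Nat.abs_cast, abs_mul]
  have h1 : |((ArithmeticFunction.moebius a : ℤ) : ℝ)| ≤ 1 := by
    exact_mod_cast (ArithmeticFunction.abs_moebius_le_one (n := a))
  have : |((ArithmeticFunction.moebius a : ℤ) : ℝ)| * |g a| ≤ 1 := mul_le_one₀ h1 (abs_nonneg _) (hg a)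
  gcongr

open Finset in
lemma M_log (i : ℕ) (g : ℕ → ℝ) (hg : ∀ n, |g n| ≤ 1) :
    |Real.log (∏ p ∈ oddPr i, (1 - g p / p))| ≤ 2 * ∑ p ∈ oddPr i, (1:ℝ) / p ∧ 0 < ∏ p ∈ oddPr i, (1 - g p / p) := by
  have key : ∀ p ∈ oddPr i, |g p / p| ≤ 1 / p ∧ |g p / p| ≤ 1 / 2 := by
    intro p hp
    simp only [oddPr, mem_filter, mem_range] at hp
    have h2 : (2:ℝ) ≤ p := by exact_mod_cast hp.2.1.two_le
    have h1 : |g p / p| ≤ 1 / p := by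
      rw [abs_div, Nat.abs_cast]
      have := hg p
      gcongr
    exact ⟨h1, h1.trans (by gcongr)⟩
  have hpos : ∀ p ∈ oddPr i, 0 < 1 - g p / p := by
    intro p hp
    have := (abs_le.mp (key p hp).2).2
    linarith
  refine ⟨?_, Finset.prod_pos hpos⟩
  rw [Real.log_prod (fun p hp => (hpos p hp).ne'), Finset.mul_sum]
  refine (Finset.abs_sum_le_sum_abs _ _).trans (Finset.sum_le_sum fun p hp => ?_)
  refine (log_one_sub_bound _ (key p hp).2).trans ?_
  linarith [(key p hp).1]

lemma const_arith (i : ℕ) (hi : 70 ≤ i) (M : ℝ) (hM : |M| ≤ 3 * i ^ 4) (x : ℝ)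
    (hx : |x| ≤ 4 * (2 + 2 ^ 60) / ((2:ℝ) ^ i) ^ 2) : |x| * |M| ≤ 1 / 16 := by
  have h4 := pow4_lt_two_pow i (by omega)
  have h4R : (i:ℝ) ^ 4 ≤ 2 ^ i := by exact_mod_cast h4.le
  have h70 : (2:ℝ) ^ 70 ≤ 2 ^ i := pow_le_pow_right₀ (by norm_num) hi
  generalize hT : (2:ℝ) ^ i = T at *
  have hT0 : 0 < T := by rw [← hT]; positivity
  calc |x| * |M| ≤ 4 * (2 + 2 ^ 60) / T ^ 2 * (3 * T) := by
        refine mul_le_mul hx (hM.trans (by gcongr)) (abs_nonneg _) (by positivity)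
    _ = 12 * (2 + 2 ^ 60) / T := by field_simp; norm_num
    _ ≤ 1 / 16 := by
        rw [div_le_iff₀ hT0]
        norm_num at h70 ⊢
        linarith

open Finset in
lemma prim_bound : ∃ i0 : ℕ, ∀ a d : ℕ, a ≤ 3 → Squarefree d → Odd d → ∀ [NeZero (2 ^ a * d)]
    (χ : DirichletCharacter ℂ (2 ^ a * d)), χ.IsPrimitive → χ ^ 2 = 1 → χ ≠ 1 →
    i0 ≤ blk (2 ^ a * d) → ¬ BadF (2 ^ a * d) →
    |Real.log ‖χ.LFunction 1‖| ≤ 2 + 2 * ∑ p ∈ oddPr (blk (2 ^ a * d)), (1:ℝ) / p := by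
  obtain ⟨j0, hj1, hj⟩ := moll_tail
  refine ⟨max j0 70, ?_⟩
  intro a d ha hsq hodd _ χ hp hq h1 hi hbad
  have hot := odd_tail χ hp hq h1 (by omega)
  have hbd : ¬ BadD (blk (2 ^ a * d)) d := fun h => hbad ⟨a, d, ha, hodd, rfl, h⟩
  have hi' : j0 ≤ blk (2 ^ a * d) ∧ 70 ≤ blk (2 ^ a * d) := by omega
  obtain ⟨i, hib⟩ : ∃ i, i = blk (2 ^ a * d) := ⟨_, rfl⟩
  rw [← hib] at hi' hot hbd ⊢
  obtain ⟨hi0, hi70⟩ := hi'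
  obtain ⟨ψ, hψ⟩ := classification ha hsq hodd χ hp hq
  set g : ℕ → ℝ := fun n => (χ (n : ZMod (2 ^ a * d))).re with hgdef
  have hg : ∀ n, |g n| ≤ 1 := fun n => quad_re_abs χ hq _
  have hg1 : g 1 = 1 := by simp [hgdef]
  have hgm : ∀ x y, g (x * y) = g x * g y := by
    intro x y; simp only [hgdef]; push_cast; exact quad_re_mul χ hq _ _
  have hgo : ∀ n, Odd n → g n = ((ψ (n : ZMod 8) : ℤ) : ℝ) * (jacobiSym (n : ℤ) d : ℝ) := by
    intro n hn
    simp only [hgdef]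
    rw [hψ n hn, Complex.intCast_re]; push_cast; rfl
  set ℓ := (χ.LFunction 1).re with hℓ
  set S := ∑ b ∈ oddB i, g b / b with hS
  set MR := ∑ a ∈ mollA i, (ArithmeticFunction.moebius a : ℝ) * g a / a with hMR
  set M := ∏ p ∈ oddPr i, (1 - g p / p) with hM
  have e1 : |S * MR - 1| ≤ 1 / 4 := by
    rw [hS, hMR, prod_expand i (by omega) g hg1 hgm]
    unfold BadD at hbd
    push Not at hbd
    refine le_trans (le_of_eq ?_) (hbd ψ)
    congr 1
    refine Finset.sum_congr rfl fun n hn => ?_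
    simp only [suppS, mem_filter] at hn
    rw [hgo n hn.2.1]; ring
  have hiR : (70:ℝ) ≤ i := by exact_mod_cast hi70
  have hsumP := oddPr_sum i (by omega)
  have e2 : |M| ≤ 3 * i ^ 4 := by
    have h := prod_le_exp i (fun p => - (g p / p)) 1 (by
      intro p hp
      rw [abs_neg, abs_div, Nat.abs_cast, one_mul]
      have := hg p
      gcongr)
    simp only [← sub_eq_add_neg, one_mul] at h
    refine h.trans ?_
    calc Real.exp (∑ p ∈ oddPr i, (1:ℝ) / p) ≤ Real.exp (1 + 4 * Real.log i) := by rw [Real.exp_le_exp]; exact hsumP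
      _ = Real.exp 1 * i ^ 4 := by
          rw [Real.exp_add, show (4:ℝ) * Real.log i = Real.log ((i:ℝ) ^ 4) by rw [Real.log_pow]; norm_num, Real.exp_log (by positivity)]
      _ ≤ 3 * i ^ 4 := by
          have := Real.exp_one_lt_d9
          gcongr; linarith
  have hot2 : |ℓ * (1 - g 2 / 2) - S| ≤ 4 * (2 + 2 ^ 60) / ((2:ℝ) ^ i) ^ 2 := by
    have : g 2 = (χ (2 : ZMod (2 ^ a * d))).re := by simp [hgdef]
    rw [this]; exact hot
  have e3 := const_arith i hi70 M e2 _ hot2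
  have e4 : |S| * |M - MR| ≤ 1 / 16 := by
    have h := M_diff i g hg
    rw [moll_prod i g hg1 hgm] at h
    have hSb := S_bound i (by omega) g hg
    have ht := hj i hi0
    calc |S| * |M - MR| ≤ (31 * i) * ∑ a ∈ (sieveP i).divisors.filter (fun a => ¬ a ≤ 2 ^ i), (1:ℝ) / a :=
          mul_le_mul hSb h (abs_nonneg _) (by positivity)
      _ ≤ 31 * (1 / 1000) := by rw [mul_assoc]; gcongr
      _ ≤ _ := by norm_num
  have e5 := real_combine _ _ _ _ e1 e3 e4
  have e6 := log_half _ e5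
  have hMl := M_log i g hg
  have h2l := log_one_sub_bound (g 2 / 2) (by rw [abs_div, abs_two]; have := hg 2; gcongr)
  have h2b : |g 2 / 2| ≤ 1 / 2 := by rw [abs_div, abs_two]; have := hg 2; gcongr
  have h2p : 0 < 1 - g 2 / 2 := by linarith [(abs_le.mp h2b).2]
  have hℓ0 : ℓ ≠ 0 := by
    rintro h
    rw [h] at e5; norm_num at e5
  rw [← L1_abs χ hq h1, ← hℓ]
  rw [Real.log_mul (mul_ne_zero hℓ0 h2p.ne') hMl.2.ne', Real.log_mul hℓ0 h2p.ne'] at e6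
  have a1 := abs_le.mp e6
  have a2 := abs_le.mp hMl.1
  have a3 := abs_le.mp (h2l.trans (by linarith : 2 * |g 2 / 2| ≤ 1))
  rw [abs_le]
  constructor <;> linarith [a1.1, a1.2, a2.1, a2.2, a3.1, a3.2]


lemma fd_struct {D : ℤ} (h : IsFundDiscr D) : ∃ s : ℕ, Squarefree s ∧ D.natAbs ∣ 4 * s := by
  rcases h.2 with h | ⟨m, rfl, hm, -⟩
  · exact ⟨D.natAbs, Int.squarefree_natAbs.mpr h.1, Dvd.intro_left _ rfl⟩
  · refine ⟨m.natAbs, Int.squarefree_natAbs.mpr hm, ?_⟩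
    rw [Int.natAbs_mul]; rfl

lemma dvd_struct {f s : ℕ} (hs : Squarefree s) (hf : f ∣ 4 * s) :
    ∃ a d : ℕ, a ≤ 3 ∧ Squarefree d ∧ Odd d ∧ f = 2 ^ a * d := by
  have hs0 := hs.ne_zero
  have hf0 : f ≠ 0 := by
    rintro rfl
    rw [zero_dvd_iff] at hf; omega
  obtain ⟨a, d, hd, rfl⟩ := Nat.exists_eq_two_pow_mul_odd hf0
  refine ⟨a, d, ?_, ?_, hd, rfl⟩
  · by_contra hc
    have h16 : 2 ^ 4 ∣ 4 * s := ((pow_dvd_pow 2 (by omega)).trans (Dvd.intro _ rfl)).trans hf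
    have h4 : 2 * 2 ∣ s := by
      have : 4 * 4 ∣ 4 * s := h16
      exact Nat.dvd_of_mul_dvd_mul_left (by norm_num) this
    have := hs 2 h4
    rw [Nat.isUnit_iff] at this; omega
  · have hco : Nat.Coprime d 4 := by
      have : Nat.Coprime d 2 := Nat.coprime_two_right.mpr hd
      exact Nat.Coprime.pow_right 2 this
    exact hs.squarefree_of_dvd (hco.dvd_of_dvd_mul_left ((Dvd.intro_left _ rfl).trans hf))

open Finset in
lemma char_bound {n : ℕ} [NeZero n] (χ : DirichletCharacter ℂ n) (hq : χ ^ 2 = 1) (h1 : χ ≠ 1) :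
    ∃ f : ℕ, f ∣ n ∧ ∃ (_ : NeZero f) (θ : DirichletCharacter ℂ f), θ.IsPrimitive ∧ θ ^ 2 = 1 ∧ θ ≠ 1 ∧
      |Real.log ‖χ.LFunction 1‖| ≤ |Real.log ‖θ.LFunction 1‖| + 2 * ∑ p ∈ n.primeFactors, (1:ℝ) / p := by
  have hdvd := χ.conductor_dvd_level
  have hnz : NeZero χ.conductor := ⟨fun h => NeZero.ne n (by rw [h, zero_dvd_iff] at hdvd; exact hdvd)⟩
  refine ⟨χ.conductor, hdvd, hnz, χ.primitiveCharacter, χ.primitiveCharacter_isPrimitive, ?_, ?_, ?_⟩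
  · apply DirichletCharacter.changeLevel_injective hdvd
    rw [map_pow, DirichletCharacter.changeLevel_primitiveCharacter, map_one, hq]
  · intro h
    apply h1
    rw [← χ.changeLevel_primitiveCharacter, h, map_one]
  · set θ := χ.primitiveCharacter with hθ
    have hθq : θ ^ 2 = 1 := by
      apply DirichletCharacter.changeLevel_injective hdvd
      rw [map_pow, hθ, DirichletCharacter.changeLevel_primitiveCharacter, map_one, hq]
    have hθ1 : θ ≠ 1 := by
      intro h
      apply h1
      rw [← χ.changeLevel_primitiveCharacter, ← hθ, h, map_one]
    have hL := DirichletCharacter.LFunction_changeLevel hdvd θ (s := 1) (Or.inl hθ1)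
    rw [hθ, DirichletCharacter.changeLevel_primitiveCharacter, ← hθ] at hL
    rw [hL, norm_mul, norm_prod]
    have key : ∀ p ∈ n.primeFactors, ‖1 - θ (p : ZMod χ.conductor) * (p:ℂ) ^ (-1:ℂ)‖ = 1 - (θ (p : ZMod χ.conductor)).re / p ∧
        |(θ (p : ZMod χ.conductor)).re / p| ≤ 1 / p ∧ |(θ (p : ZMod χ.conductor)).re / p| ≤ 1 / 2 := by
      intro p hp
      have h2 : (2:ℝ) ≤ p := by exact_mod_cast (Nat.prime_of_mem_primeFactors hp).two_le
      have hab : |(θ (p : ZMod χ.conductor)).re / p| ≤ 1 / p := by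
        rw [abs_div, Nat.abs_cast]
        have := quad_re_abs θ hθq (p : ZMod χ.conductor)
        gcongr
      have hab2 : |(θ (p : ZMod χ.conductor)).re / p| ≤ 1 / 2 := hab.trans (by gcongr)
      refine ⟨?_, hab, hab2⟩
      have hr := quad_re θ hθq (p : ZMod χ.conductor)
      rw [hr, Complex.cpow_neg_one]
      have : (1:ℂ) - (((θ (p : ZMod χ.conductor)).re : ℝ) : ℂ) * (p:ℂ)⁻¹ = ((1 - (θ (p : ZMod χ.conductor)).re / p : ℝ) : ℂ) := by
        push_cast; rw [div_eq_mul_inv]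
      rw [this, Complex.norm_real, Real.norm_eq_abs, Complex.ofReal_re, abs_of_nonneg]
      linarith [(abs_le.mp hab2).2]
    rw [Finset.prod_congr rfl (fun p hp => (key p hp).1)]
    have hpos : ∀ p ∈ n.primeFactors, 0 < 1 - (θ (p : ZMod χ.conductor)).re / p := by
      intro p hp
      linarith [(abs_le.mp (key p hp).2.2).2]
    have hL0 : ‖θ.LFunction 1‖ ≠ 0 := by
      rw [norm_ne_zero_iff]
      exact DirichletCharacter.LFunction_ne_zero_of_one_le_re θ (Or.inl hθ1) (by simp)
    rw [Real.log_mul hL0 (Finset.prod_pos hpos).ne', Real.log_prod (fun p hp => (hpos p hp).ne')]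
    refine (abs_add_le _ _).trans ?_
    gcongr
    rw [Finset.mul_sum]
    refine (Finset.abs_sum_le_sum_abs _ _).trans (Finset.sum_le_sum fun p hp => ?_)
    refine (log_one_sub_bound _ (key p hp).2.2).trans ?_
    linarith [(key p hp).2.1]

lemma small_bound (W : ℕ) : ∃ G : ℝ, 0 ≤ G ∧ ∀ f : ℕ, f < W → ∀ [NeZero f] (χ : DirichletCharacter ℂ f),
    |Real.log ‖χ.LFunction 1‖| ≤ G := by
  induction W with
  | zero => exact ⟨0, le_rfl, fun f hf => absurd hf (by omega)⟩
  | succ W ih =>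
    obtain ⟨G, hG0, hG⟩ := ih
    by_cases hW : W = 0
    · refine ⟨G, hG0, fun f hf hnz χ => ?_⟩
      have := hnz.out
      omega
    · have : NeZero W := ⟨hW⟩
      obtain ⟨B, hB⟩ := (Set.finite_range (fun χ : DirichletCharacter ℂ W => |Real.log ‖χ.LFunction 1‖|)).bddAbove
      refine ⟨max G B, le_max_of_le_left hG0, fun f hf hnz χ => ?_⟩
      rcases Nat.lt_succ_iff_lt_or_eq.mp hf with h | h
      · exact (hG f h χ).trans (le_max_left _ _)
      · subst h
        exact (hB ⟨χ, rfl⟩).trans (le_max_right _ _)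

open Finset in
lemma oddPr_tlg {f n : ℕ} (hn : n ≠ 0) (hf : f ≤ n) : ∑ p ∈ oddPr (blk f), (1:ℝ) / p ≤ 11 + 4 * Real.log (tlg n) := by
  have h1 : blk f < 2 ^ tlg n := by
    refine lt_of_le_of_lt ?_ (log_lt_tlg n)
    exact (Nat.div_le_self _ _).trans (Nat.log_mono_right hf)
  have hm1 : 1 ≤ tlg n := by simp [tlg]
  have h2 : (blk f) ^ 4 ≤ 2 ^ (4 * tlg n) := by
    rw [mul_comm, pow_mul]; exact Nat.pow_le_pow_left h1.le 4
  have h3 := mertens (4 * tlg n) (by omega)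
  have hl : Real.log ((4 * tlg n : ℕ) : ℝ) = 2 * Real.log 2 + Real.log (tlg n) := by
    rw [Nat.cast_mul, Real.log_mul (by norm_num) (by exact_mod_cast (by omega : tlg n ≠ 0))]
    congr 1
    rw [show ((4:ℕ):ℝ) = 2 ^ 2 by norm_num, Real.log_pow]; norm_num
  rw [hl] at h3
  have := Real.log_two_lt_d9
  refine le_trans ?_ (h3.trans (by linarith))
  refine Finset.sum_le_sum_of_subset_of_nonneg ?_ (fun _ _ _ => by positivity)
  intro p hp
  simp only [oddPr, mem_filter, mem_range] at hp ⊢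
  exact ⟨by omega, hp.2.1⟩

lemma quad_bound : ∃ i0 : ℕ, ∀ i1 : ℕ, i0 ≤ i1 → ∃ G : ℝ, 0 ≤ G ∧ ∀ (n : ℕ) [NeZero n],
    (∃ s : ℕ, Squarefree s ∧ n ∣ 4 * s) → (∀ f, f ∣ n → i1 ≤ blk f → ¬ BadF f) →
    ∀ χ : DirichletCharacter ℂ n, χ ^ 2 = 1 → χ ≠ 1 → |Real.log ‖χ.LFunction 1‖| ≤ G + 16 * Real.log (tlg n) := by
  obtain ⟨i0, hi0⟩ := prim_bound
  refine ⟨i0, fun i1 hi1 => ?_⟩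
  obtain ⟨G, hG0, hG⟩ := small_bound (2 ^ (60 * i1))
  refine ⟨G + 36, by linarith, fun n hnz ⟨s, hs, hns⟩ hbad χ hq h1 => ?_⟩
  obtain ⟨f, hfn, hfz, θ, hθp, hθq, hθ1, hle⟩ := char_bound χ hq h1
  have hn0 : n ≠ 0 := NeZero.ne n
  have hpf := primeFactors_sum n hn0
  have hlog : 0 ≤ Real.log (tlg n) := Real.log_natCast_nonneg _
  by_cases hb : i1 ≤ blk f
  · have hnb := hbad f hfn hb
    have hfl : f ≤ n := Nat.le_of_dvd (Nat.pos_of_ne_zero hn0) hfn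
    have hop := oddPr_tlg hn0 hfl
    obtain ⟨a, d, ha, hds, hdo, rfl⟩ := dvd_struct hs (hfn.trans hns)
    have := hi0 a d ha hds hdo θ hθp hθq hθ1 (hi1.trans hb) hnb
    linarith
  · have hfW : f < 2 ^ (60 * i1) := (blk_bounds (NeZero.ne f)).2.trans_le (Nat.pow_le_pow_right (by norm_num) (by omega))
    have := hG f hfW θ
    linarith


lemma analytic_cmp (G ε : ℝ) (hG : 0 ≤ G) (hε : 0 < ε) : ∃ X0 : ℕ, ∀ n : ℕ, X0 ≤ n →
    (G + 16 * Real.log (tlg n)) ^ 2 ≤ Real.log (Real.log n) ^ (2 - Real.log 2 + ε) := by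
  set K : ℝ := (G + 200) ^ 4 with hK
  refine ⟨⌈Real.exp (Real.exp K)⌉₊, fun n hn => ?_⟩
  have hn' : Real.exp (Real.exp K) ≤ n := Nat.ceil_le.mp hn
  have hnp : (0:ℝ) < n := lt_of_lt_of_le (Real.exp_pos _) hn'
  have h1 : Real.exp K ≤ Real.log n := by rw [Real.le_log_iff_exp_le hnp]; exact hn'
  have hlp : 0 < Real.log n := lt_of_lt_of_le (Real.exp_pos _) h1
  have h2 : K ≤ Real.log (Real.log n) := by rw [Real.le_log_iff_exp_le hlp]; exact h1
  set u := Real.log (Real.log n) with hu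
  have hK1 : 1 ≤ K := one_le_pow₀ (by linarith)
  have hu0 : 0 < u := by linarith
  set t := Real.sqrt (Real.sqrt u) with ht
  have ht2 : t ^ 2 = Real.sqrt u := Real.sq_sqrt (Real.sqrt_nonneg _)
  have ht4 : t ^ 4 = u := by
    rw [show t ^ 4 = (t ^ 2) ^ 2 by ring, ht2, Real.sq_sqrt (by positivity)]
  have ht0 : 0 ≤ t := Real.sqrt_nonneg _
  have ht1 : G + 200 ≤ t := by
    rw [← ht4, hK] at h2
    exact le_of_pow_le_pow_left₀ (by norm_num) ht0 h2
  have hl2 := Real.log_two_gt_d9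
  have hl2' := Real.log_two_lt_d9
  have hn0 : n ≠ 0 := by rintro rfl; simp at hnp
  -- bound of the double logarithm to base two
  have hA : (Nat.log 2 n : ℝ) * Real.log 2 ≤ Real.log n := by
    rw [← Real.log_pow]
    exact Real.log_le_log (by positivity) (by exact_mod_cast Nat.pow_log_le_self 2 hn0)
  have hB : (Nat.log 2 (Nat.log 2 n) : ℝ) * Real.log 2 ≤ u + 1 := by
    by_cases hz : Nat.log 2 n = 0
    · rw [hz]; simp; linarith
    rw [← Real.log_pow]
    have hle : ((2:ℝ) ^ (Nat.log 2 (Nat.log 2 n))) ≤ Nat.log 2 n := by exact_mod_cast Nat.pow_log_le_self 2 hz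
    have hle2 : ((2:ℝ) ^ (Nat.log 2 (Nat.log 2 n))) ≤ Real.log n * 2 := by nlinarith [(Nat.cast_nonneg (Nat.log 2 n) : (0:ℝ) ≤ _)]
    refine (Real.log_le_log (by positivity) hle2).trans ?_
    rw [Real.log_mul hlp.ne' (by norm_num)]
    linarith
  have hC : (tlg n : ℝ) ≤ 4 * u := by
    unfold tlg
    push_cast
    have : (Nat.log 2 (Nat.log 2 n) : ℝ) ≤ 2 * (u + 1) := by nlinarith [(Nat.cast_nonneg (Nat.log 2 (Nat.log 2 n)) : (0:ℝ) ≤ _)]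
    have : (200:ℝ) ≤ K := by
      rw [hK]
      calc (200:ℝ) ≤ G + 200 := by linarith
        _ ≤ (G + 200) ^ 4 := le_self_pow₀ (by linarith) (by norm_num)
    linarith
  have htp : (0:ℝ) < tlg n := by unfold tlg; positivity
  have hD : Real.log (tlg n) ≤ 2 + 4 * t := by
    refine (Real.log_le_log htp hC).trans ?_
    rw [Real.log_mul (by norm_num) hu0.ne', show (4:ℝ) = 2 ^ 2 by norm_num, Real.log_pow, ← ht4, Real.log_pow]
    have := Real.log_le_self ht0
    push_cast; linarith
  have hlog0 : 0 ≤ Real.log (tlg n) := Real.log_natCast_nonneg _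
  have hE : G + 16 * Real.log (tlg n) ≤ t ^ 2 := by nlinarith
  calc (G + 16 * Real.log (tlg n)) ^ 2 ≤ (t ^ 2) ^ 2 := by gcongr
    _ = u ^ (1:ℝ) := by rw [Real.rpow_one, ← ht4]; ring
    _ ≤ u ^ (2 - Real.log 2 + ε) := Real.rpow_le_rpow_of_exponent_le (by linarith) (by linarith)

open Finset in
lemma card_natAbs (S : Finset ℤ) (T : Finset ℕ) (h : ∀ D ∈ S, D.natAbs ∈ T) : S.card ≤ 2 * T.card := by
  have hsub : S ⊆ T.image (fun n : ℕ => (n:ℤ)) ∪ T.image (fun n : ℕ => -(n:ℤ)) := by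
    intro D hD
    rw [mem_union, mem_image, mem_image]
    rcases Int.natAbs_eq D with h' | h'
    · left; exact ⟨_, h D hD, h'.symm⟩
    · right; exact ⟨_, h D hD, h'.symm⟩
  refine (card_le_card hsub).trans ((card_union_le _ _).trans ?_)
  have h1 := card_image_le (s := T) (f := fun n : ℕ => (n:ℤ))
  have h2 := card_image_le (s := T) (f := fun n : ℕ => -(n:ℤ))
  omega

open Finset in
open Classical in
lemma fdCount_eq (P : ℤ → Prop) (X : ℝ) :
    fdCount P X = ((Icc (-⌊X⌋) ⌊X⌋).filter (fun D => IsFundDiscr D ∧ P D)).card := by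
  unfold fdCount
  refine Nat.subtype_card _ fun D => ?_
  simp only [mem_filter, mem_Icc]
  have : |(D:ℝ)| ≤ X ↔ -⌊X⌋ ≤ D ∧ D ≤ ⌊X⌋ := by
    rw [← Int.cast_abs, ← Int.le_floor, abs_le]
  rw [this]; tauto

open Finset in
lemma odd_sq_sum (K : ℕ) (hK : 1 ≤ K) : ∑ k ∈ Icc 1 K, (1:ℝ) / (2 * (k:ℝ) + 1) ^ 2 ≤ (17:ℝ) / 72 - 1 / (4 * ((K:ℝ) + 1)) := by
  induction K, hK using Nat.le_induction with
  | base => norm_num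
  | succ K hK ih =>
    rw [Finset.sum_Icc_succ_top (by omega)]
    have h : (1:ℝ) / (2 * ((K + 1 : ℕ):ℝ) + 1) ^ 2 ≤ 1 / (4 * ((K:ℝ) + 1)) - 1 / (4 * (((K + 1 : ℕ):ℝ) + 1)) := by
      push_cast
      rw [div_sub_div _ _ (by positivity) (by positivity), div_le_div_iff₀ (by positivity) (by positivity)]
      nlinarith [(Nat.cast_nonneg K : (0:ℝ) ≤ K)]
    linarith

open Finset in
open Classical in
lemma fd_lower (N : ℕ) : (N:ℝ) / 72 - 2 ≤ (((range (N + 1)).filter (fun n : ℕ => IsFundDiscr (n:ℤ))).card : ℝ) := by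
  set A := (Icc 1 ((N - 1) / 4)).image (fun k => 4 * k + 1) with hA
  have hAc : A.card = (N - 1) / 4 := by
    rw [hA, card_image_of_injective _ (fun a b h => by simpa using h)]; simp
  set B := (Icc 1 (N + 1)).biUnion (fun k => (Ioc 0 N).filter (fun n => (2 * k + 1) ^ 2 ∣ n)) with hB
  have hsub : A ⊆ (range (N + 1)).filter (fun n : ℕ => IsFundDiscr (n:ℤ)) ∪ B := by
    intro n hn
    rw [hA, mem_image] at hn
    obtain ⟨k, hk, rfl⟩ := hn
    rw [mem_Icc] at hk
    rw [mem_union]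
    have hkN : 4 * k + 1 ≤ N := by omega
    by_cases hsq : Squarefree (4 * k + 1)
    · left
      rw [mem_filter, mem_range]
      refine ⟨by omega, by omega, Or.inl ⟨?_, by omega⟩⟩
      exact Int.squarefree_natCast.mpr hsq
    · right
      unfold Squarefree at hsq
      push Not at hsq
      obtain ⟨m, hm, hmu⟩ := hsq
      rw [Nat.isUnit_iff] at hmu
      have hmo : Odd m := by
        have : Odd (4 * k + 1) := ⟨2 * k, by ring⟩
        exact this.of_dvd_nat ((Dvd.intro _ rfl).trans hm)
      obtain ⟨j, rfl⟩ := hmo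
      rw [hB, mem_biUnion]
      have hle : 2 * j + 1 ≤ 4 * k + 1 := Nat.le_of_dvd (by omega) ((Dvd.intro _ rfl).trans hm)
      refine ⟨j, by rw [mem_Icc]; omega, ?_⟩
      rw [mem_filter, mem_Ioc]
      exact ⟨by omega, by rw [pow_two]; exact hm⟩
  have hBc : (B.card : ℝ) ≤ N * (17 / 72) := by
    have h1 : B.card ≤ ∑ k ∈ Icc 1 (N + 1), N / (2 * k + 1) ^ 2 := by
      refine card_biUnion_le.trans (Finset.sum_le_sum fun k _ => ?_)
      rw [Nat.Ioc_filter_dvd_card_eq_div]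
    have h2 : (B.card : ℝ) ≤ ∑ k ∈ Icc 1 (N + 1), (N:ℝ) * (1 / (2 * k + 1) ^ 2) := by
      refine (by exact_mod_cast h1 : (B.card : ℝ) ≤ ((∑ k ∈ Icc 1 (N + 1), N / (2 * k + 1) ^ 2 : ℕ) : ℝ)).trans ?_
      push_cast
      refine Finset.sum_le_sum fun k _ => ?_
      refine Nat.cast_div_le.trans ?_
      push_cast
      rw [mul_one_div]
    rw [← Finset.mul_sum] at h2
    refine h2.trans ?_
    have h3 := odd_sq_sum (N + 1) (by omega)
    have h4 : (0:ℝ) ≤ 1 / (4 * (((N + 1 : ℕ):ℝ) + 1)) := by positivity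
    gcongr
    linarith
  have h5 := (card_le_card hsub).trans (card_union_le _ _)
  rw [hAc] at h5
  have h6 : (N:ℝ) / 4 - 2 ≤ (((N - 1) / 4 : ℕ) : ℝ) := by
    have : N ≤ 4 * ((N - 1) / 4) + 4 := by omega
    have : (N:ℝ) ≤ 4 * (((N - 1) / 4 : ℕ) : ℝ) + 4 := by exact_mod_cast this
    linarith
  have h7 : ((((N - 1) / 4 : ℕ)) : ℝ) ≤ (((range (N + 1)).filter (fun n : ℕ => IsFundDiscr (n:ℤ))).card : ℝ) + B.card := by exact_mod_cast h5
  linarith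

open Finset in
open Classical in
lemma fdCount_lower (X : ℝ) (hX : 0 ≤ X) : X / 72 - 3 ≤ (fdCount (fun _ => True) X : ℝ) := by
  have h := fd_lower ⌊X⌋₊
  have h1 : X < ⌊X⌋₊ + 1 := Nat.lt_floor_add_one X
  have h2 : ((range (⌊X⌋₊ + 1)).filter (fun n : ℕ => IsFundDiscr (n:ℤ))).card ≤ fdCount (fun _ => True) X := by
    rw [fdCount_eq]
    refine Finset.card_le_card_of_injOn (fun n : ℕ => (n:ℤ)) ?_ ?_
    · intro n hn
      rw [mem_coe, mem_filter, mem_range] at hn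
      simp only [mem_coe, mem_filter, mem_Icc]
      have h3 : (n:ℤ) ≤ ⌊X⌋ := by
        rw [Int.le_floor]
        have : n ≤ ⌊X⌋₊ := by omega
        exact_mod_cast (Nat.le_floor_iff hX).mp this
      exact ⟨⟨by omega, h3⟩, hn.2, trivial⟩
    · intro a _ b _ hab
      simp only at hab
      exact_mod_cast hab
  have h3 : (((range (⌊X⌋₊ + 1)).filter (fun n : ℕ => IsFundDiscr (n:ℤ))).card : ℝ) ≤ (fdCount (fun _ => True) X : ℝ) := by exact_mod_cast h2
  linarith

open Finset in
open Classical in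
lemma fail_count (P : ℤ → Prop) (i1 X0 : ℕ) (η : ℝ)
    (hη : ∀ Y : ℕ, ∑ f ∈ (range Y).filter (fun f => f ≠ 0 ∧ i1 ≤ blk f ∧ BadF f), (1:ℝ) / f ≤ η)
    (hP : ∀ D : ℤ, IsFundDiscr D → X0 ≤ D.natAbs → (∀ f, f ∣ D.natAbs → i1 ≤ blk f → ¬ BadF f) → P D)
    (X : ℝ) (hX : 0 ≤ X) :
    (fdCount (fun _ => True) X : ℝ) - fdCount P X ≤ 2 * X0 + 2 * η * X := by
  set N := ⌊X⌋₊ with hN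
  set F := (range (N + 1)).filter (fun f => f ≠ 0 ∧ i1 ≤ blk f ∧ BadF f) with hF
  set T := range X0 ∪ F.biUnion (fun f => (Ioc 0 N).filter (fun n => f ∣ n)) with hT
  set S := (Icc (-⌊X⌋) ⌊X⌋).filter (fun D => IsFundDiscr D ∧ ¬ P D) with hS
  have hST : ∀ D ∈ S, D.natAbs ∈ T := by
    intro D hD
    rw [hS, mem_filter, mem_Icc] at hD
    obtain ⟨hDX, hfd, hnP⟩ := hD
    rw [hT, mem_union, mem_range]
    by_cases hlt : D.natAbs < X0
    · left; exact hlt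
    · right
      have : ¬ ∀ f, f ∣ D.natAbs → i1 ≤ blk f → ¬ BadF f := fun h => hnP (hP D hfd (by omega) h)
      push Not at this
      obtain ⟨f, hf, hbl, hbad⟩ := this
      have hD0 : D.natAbs ≠ 0 := by
        obtain ⟨s, hs, hds⟩ := fd_struct hfd
        intro h0
        rw [h0, zero_dvd_iff] at hds
        have := hs.ne_zero
        omega
      have hDN : D.natAbs ≤ N := by
        have h1 : (⌊X⌋₊ : ℤ) = ⌊X⌋ := Int.natCast_floor_eq_floor hX
        omega
      have hfD : f ≤ D.natAbs := Nat.le_of_dvd (by omega) hf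
      rw [mem_biUnion]
      refine ⟨f, ?_, ?_⟩
      · rw [hF, mem_filter, mem_range]
        refine ⟨by omega, ?_, hbl, hbad⟩
        rintro rfl
        rw [zero_dvd_iff] at hf; exact hD0 hf
      · rw [mem_filter, mem_Ioc]
        exact ⟨⟨by omega, hDN⟩, hf⟩
  have hcard := card_natAbs S T hST
  have hTc : (T.card : ℝ) ≤ X0 + η * X := by
    have h1 : T.card ≤ X0 + ∑ f ∈ F, N / f := by
      refine (card_union_le _ _).trans ?_
      rw [card_range]
      gcongr
      refine card_biUnion_le.trans (Finset.sum_le_sum fun f _ => ?_)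
      rw [Nat.Ioc_filter_dvd_card_eq_div]
    have h2 : (T.card : ℝ) ≤ X0 + ∑ f ∈ F, (N:ℝ) * (1 / f) := by
      refine (by exact_mod_cast h1 : (T.card : ℝ) ≤ ((X0 + ∑ f ∈ F, N / f : ℕ) : ℝ)).trans ?_
      push_cast
      gcongr with f hf
      refine Nat.cast_div_le.trans ?_
      rw [mul_one_div]
    rw [← Finset.mul_sum] at h2
    have h3 := hη (N + 1)
    have h4 : (N:ℝ) ≤ X := Nat.floor_le hX
    have h5 : 0 ≤ ∑ f ∈ F, (1:ℝ) / f := Finset.sum_nonneg fun _ _ => by positivity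
    have h6 : (N:ℝ) * ∑ f ∈ F, (1:ℝ) / f ≤ X * η := mul_le_mul h4 h3 h5 hX
    linarith
  have hsum : fdCount (fun _ => True) X = fdCount P X + S.card := by
    rw [fdCount_eq, fdCount_eq, hS, ← Finset.card_union_of_disjoint]
    · congr 1
      ext D
      simp only [mem_filter, mem_union]
      tauto
    · rw [Finset.disjoint_left]
      intro D h1 h2
      rw [mem_filter] at h1 h2
      exact h2.2.2 h1.2.2
  rw [hsum]
  push_cast
  have : (S.card : ℝ) ≤ 2 * T.card := by exact_mod_cast hcard
  linarith

lemma density (P : ℤ → Prop) (h : ∀ η : ℝ, 0 < η → ∃ X0 : ℕ, ∀ X : ℝ, 0 ≤ X →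
    (fdCount (fun _ => True) X : ℝ) - fdCount P X ≤ 2 * X0 + 2 * η * X)
    (hle : ∀ X, fdCount P X ≤ fdCount (fun _ => True) X) : FdDensityOne P := by
  unfold FdDensityOne
  rw [Metric.tendsto_atTop]
  intro δ hδ
  obtain ⟨X0, hX0⟩ := h (δ / 1000) (by positivity)
  refine ⟨max 1000 (1000 * X0 / δ), fun X hX => ?_⟩
  have hX1 : 1000 ≤ X := (le_max_left _ _).trans hX
  have hX2 : 1000 * X0 / δ ≤ X := (le_max_right _ _).trans hX
  rw [div_le_iff₀ hδ] at hX2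
  have h1 := hX0 X (by linarith)
  have h2 := fdCount_lower X (by linarith)
  have h3 : (fdCount P X : ℝ) ≤ fdCount (fun _ => True) X := by exact_mod_cast hle X
  set A : ℝ := (fdCount P X : ℝ)
  set B : ℝ := (fdCount (fun _ => True) X : ℝ)
  have hB : 0 < B := by linarith
  rw [Real.dist_eq, div_sub_one hB.ne', abs_div, abs_of_pos hB, div_lt_iff₀ hB, abs_sub_comm, abs_of_nonneg (by linarith)]
  have hBX : X / 100 ≤ B := by linarith
  have : δ * (X / 100) ≤ δ * B := by gcongr
  have : 0 < δ * X := by positivity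
  linarith

/-- There is an (admissible exceptional-zero) constant `c > 0` such that for every `ε > 0` and
100% of fundamental discriminants `D`: with `V` the set of quadratic Dirichlet characters mod
`|D|` whose `L`-function has no real zero `β > 1 - c/log |D|`,
`∑_{χ ∈ V} (log L(1,χ))² ≤ #V (log log |D|)^{2 - log 2 + ε}`. -/
theorem statement_15 :
    ∃ c : ℝ, 0 < c ∧
      ∀ ε : ℝ, 0 < ε →
        FdDensityOne (fun D =>
          ∀ [NeZero D.natAbs],
            ∀ V : Finset (DirichletCharacter ℂ D.natAbs),
              (∀ χ, χ ∈ V ↔ χ ^ 2 = 1 ∧ χ ≠ 1 ∧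
                ¬∃ β : ℝ, χ.LFunction β = 0 ∧ 1 - c / Real.log |(D : ℝ)| < β) →
              ∑ χ ∈ V, Real.log (χ.LFunction 1).re ^ 2 ≤
                V.card * Real.log (Real.log |(D : ℝ)|) ^ (2 - Real.log 2 + ε)) := by
  classical
  refine ⟨1, one_pos, fun ε hε => ?_⟩
  obtain ⟨i0, hi0⟩ := quad_bound
  refine density _ ?_ ?_
  · intro η hη
    obtain ⟨i1, hi1, -, htail⟩ := bad_tail η hη i0
    obtain ⟨G, hG0, hG⟩ := hi0 i1 hi1
    obtain ⟨X0, hX0⟩ := analytic_cmp G ε hG0 hε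
    refine ⟨X0, fun X hX => fail_count _ i1 X0 η htail ?_ X hX⟩
    intro D hfd hDX hgood hnz V hV
    have hcast : |(D : ℝ)| = (D.natAbs : ℝ) := by rw [Nat.cast_natAbs, Int.cast_abs]
    have hbd := hG D.natAbs (fd_struct hfd) hgood
    have hcmp := hX0 D.natAbs hDX
    rw [hcast]
    rw [← nsmul_eq_mul]
    refine Finset.sum_le_card_nsmul _ _ _ fun χ hχ => ?_
    obtain ⟨hq, h1, -⟩ := (hV χ).mp hχ
    rw [L1_abs χ hq h1]
    refine le_trans ?_ hcmp
    rw [← sq_abs]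
    have := hbd χ hq h1
    gcongr
  · intro X
    rw [fdCount_eq, fdCount_eq]
    refine Finset.card_le_card fun D hD => ?_
    simp only [Finset.mem_filter] at hD ⊢
    exact ⟨hD.1, hD.2.1, trivial⟩
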